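/- arXiv:2206.14758 — 2 statements merged into one kernel-verified Lean document; each statement's English description precedes it below -/
import Mathlib

section
/- Let f : 𝔻ⁿ → 𝔻 be holomorphic and C²-smooth on the closed polydisc, and suppose f(ζ) = η for some ζ ∈ 𝕋ⁿ and η ∈ 𝕋. Then there exists a constant c > 0 such that for all sufficiently small δ > 0, the Lebesgue volume of {z ∈ 𝔻ⁿ : |f(z) - η| ≤ δ} is at least c·δ^{(3n+1)/2}. -/
open MeasureTheory Metric Set ENNReal

noncomputable section

/-- The open unit polydisc in `ℂⁿ`. -/
def polydisc (n : ℕ) : Set (Fin n → ℂ) := {z | ∀ j, ‖z j‖ < 1}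

/-- The closed unit polydisc in `ℂⁿ`. -/
def closedPolydisc (n : ℕ) : Set (Fin n → ℂ) := {z | ∀ j, ‖z j‖ ≤ 1}

/-- The distinguished boundary (torus) of the polydisc. -/
def torus (n : ℕ) : Set (Fin n → ℂ) := {z | ∀ j, ‖z j‖ = 1}

/-!
In the coordinates `z j = ζ j * (1 - (x j + i * y j))` the polydisc is the set where
`x j ^ 2 + y j ^ 2 < 2 * x j` for all `j`. Since `‖f‖` is maximal at `ζ`, the derivative `L` of `f`
at `ζ` maps the directions `y`, which are tangent to the torus, into the real line orthogonal to
`f ζ`, so on them `‖L‖` is the absolute value of a single real functional `ℓ`. On the box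
`x j ≈ r ^ 2`, `|y j| < r`, cut by the slab `|ℓ y| < r ^ 2`, the quadratic error, the `x`-part and
the `y`-part of `f z - f ζ` are therefore all `O(r ^ 2)`. The box has volume
`≈ r ^ (2 * n) * r ^ n`, of which the slab keeps a fraction `≳ r`; now put `r ≈ √δ`.
-/

open Filter Asymptotics
open scoped Topology Pointwise RealInnerProductSpace

section NormedSpace

variable {E F : Type*} [NormedAddCommGroup E] [NormedSpace ℝ E] [NormedAddCommGroup F]
  {s : Set E} {x : E}

theorem exists_sub_sub_isBigO_sq [NormedSpace ℝ F] {f : E → F} (hs : Convex ℝ s) (hx : x ∈ s)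
    (hf : ContDiffWithinAt ℝ 2 f s x) :
    ∃ L : E →L[ℝ] F, (fun y => f y - f x - L (y - x)) =O[𝓝[s] x] fun y => ‖y - x‖ ^ 2 := by
  obtain ⟨u, hu, -, -, f', hderiv, hf'⟩ :=
    (contDiffWithinAt_succ_iff_hasFDerivWithinAt' (n := 1) (by simp)).1 hf
  rw [insert_eq_of_mem hx] at hu
  obtain ⟨C, hC0, hC⟩ :=
    (hf'.differentiableWithinAt one_ne_zero).hasFDerivWithinAt.isBigO_sub.exists_nonneg
  rw [isBigOWith_iff] at hC
  refine ⟨f' x, .of_bound C ?_⟩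
  filter_upwards [self_mem_nhdsWithin, hs.eventually_nhdsWithin_segment hx (hC.and hu)]
    with y hy hseg
  have hbound : ∀ w ∈ segment ℝ x y, ‖f' w - f' x‖ ≤ C * ‖y - x‖ := fun w hw =>
    (hseg w hw).1.trans (by gcongr; exact norm_sub_le_of_mem_segment hw)
  have hmean := (convex_segment x y).norm_image_sub_le_of_norm_hasFDerivWithin_le'
    (fun w hw => (hderiv w (hseg w hw).2).mono (hs.segment_subset hx hy)) hbound
    (left_mem_segment ℝ x y) (right_mem_segment ℝ x y)
  rwa [norm_pow, norm_norm, sq, ← mul_assoc]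

theorem inner_apply_sub_nonpos_of_openSegment_subset [InnerProductSpace ℝ F] {f : E → F}
    {L : E →L[ℝ] F} (hf : HasFDerivWithinAt f L s x) (hmax : ∀ᶠ z in 𝓝[s] x, ‖f z‖ ≤ ‖f x‖)
    {y : E} (hy : openSegment ℝ x y ⊆ s) : ⟪f x, L (y - x)⟫ ≤ 0 := by
  have hloc : IsLocalMaxOn (fun z => ⟪f x, f z⟫) s x := by
    filter_upwards [hmax] with z hz
    calc ⟪f x, f z⟫ ≤ ‖f x‖ * ‖f z‖ := real_inner_le_norm _ _
      _ ≤ ‖f x‖ * ‖f x‖ := by gcongr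
      _ = ⟪f x, f x⟫ := (real_inner_self_eq_norm_mul_norm _).symm
  exact hloc.hasFDerivWithinAt_nonpos ((innerSL ℝ (f x)).hasFDerivAt.comp_hasFDerivWithinAt x hf)
    (sub_mem_posTangentConeAt_of_openSegment_subset hy)

theorem exists_continuousLinearMap_norm_apply_eq_abs {T : E →L[ℝ] ℂ} {η : ℂ} (hη : ‖η‖ = 1)
    (hT : ∀ v, ⟪η, T v⟫ = 0) : ∃ ℓ : E →L[ℝ] ℝ, ∀ v, ‖T v‖ = |ℓ v| := by
  refine ⟨Complex.imCLM ∘L (starRingEnd ℂ η • T), fun v => ?_⟩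
  have hre : (starRingEnd ℂ η * T v).re = 0 := by rw [← hT v, Complex.inner, mul_comm]
  calc ‖T v‖ = ‖starRingEnd ℂ η * T v‖ := by rw [norm_mul, RCLike.norm_conj, hη, one_mul]
    _ = |(starRingEnd ℂ η * T v).im| := (Complex.abs_im_eq_norm.2 hre).symm

end NormedSpace

section Slab

/-- Pigeonhole: cut `Q` by the level sets of `⌊ℓ / s⌋`; each nonempty piece is contained in a
translate of the slab. -/
theorem measure_le_mul_measure_sub_inter_slab {G : Type*} [AddCommGroup G] [MeasurableSpace G]
    [MeasurableAdd G] (μ : Measure G) [μ.IsAddLeftInvariant] (ℓ : G →+ ℝ) (Q : Set G) {R s : ℝ}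
    (hs : 0 < s) (hR : ∀ v ∈ Q, |ℓ v| ≤ R) :
    μ Q ≤ (2 * ⌈R / s⌉₊ + 1 : ℕ) * μ ((Q - Q) ∩ {v | |ℓ v| < s}) := by
  set N := ⌈R / s⌉₊
  let piece (k : ℤ) : Set G := {v ∈ Q | ⌊ℓ v / s⌋ = k}
  have hcover : Q ⊆ ⋃ k ∈ Finset.Icc (-N : ℤ) N, piece k := by
    intro v hv
    have hN : |ℓ v / s| ≤ N := by
      rw [abs_div, abs_of_pos hs]
      exact (div_le_div_of_nonneg_right (hR v hv) hs.le).trans (Nat.le_ceil _)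
    obtain ⟨hlow, hupp⟩ := abs_le.1 hN
    simp only [mem_iUnion, Finset.mem_Icc]
    refine ⟨⌊ℓ v / s⌋, ⟨Int.le_floor.2 (by exact_mod_cast hlow), ?_⟩, hv, rfl⟩
    exact_mod_cast (Int.floor_le _).trans hupp
  have hpiece (k : ℤ) : μ (piece k) ≤ μ ((Q - Q) ∩ {v | |ℓ v| < s}) := by
    obtain hempty | ⟨w, hwQ, hw⟩ := (piece k).eq_empty_or_nonempty
    · simp [hempty]
    rw [← measure_preimage_add μ (-w) ((Q - Q) ∩ _)]
    refine measure_mono fun v ⟨hvQ, hv⟩ => ?_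
    rw [mem_preimage, neg_add_eq_sub]
    refine ⟨sub_mem_sub hvQ hwQ, ?_⟩
    have hlt := Int.abs_sub_lt_one_of_floor_eq_floor (hv.trans hw.symm)
    rwa [← sub_div, ← map_sub, abs_div, abs_of_pos hs, div_lt_one hs] at hlt
  calc μ Q ≤ ∑ k ∈ Finset.Icc (-N : ℤ) N, μ (piece k) :=
        (measure_mono hcover).trans (measure_biUnion_finset_le _ _)
    _ ≤ (Finset.Icc (-N : ℤ) N).card • μ ((Q - Q) ∩ {v | |ℓ v| < s}) :=
        Finset.sum_le_card_nsmul _ _ _ fun k _ => hpiece k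
    _ = (2 * N + 1 : ℕ) * μ ((Q - Q) ∩ {v | |ℓ v| < s}) := by
        rw [nsmul_eq_mul, Int.card_Icc]
        congr 2
        lia

theorem le_volume_ball_inter_slab {ι : Type*} [Fintype ι] (ℓ : (ι → ℝ) →L[ℝ] ℝ) {r s : ℝ}
    (hr : 0 < r) (hs : 0 < s) :
    ENNReal.ofReal (s / (‖ℓ‖ * r + 3 * s) * r ^ Fintype.card ι) ≤
      volume (ball 0 r ∩ {y | |ℓ y| < s}) := by
  have hbound : ∀ y ∈ ball (0 : ι → ℝ) (r / 2), |ℓ y| ≤ ‖ℓ‖ * (r / 2) := fun y hy =>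
    ℓ.le_opNorm_of_le (mem_ball_zero_iff.1 hy).le
  have hpigeon := measure_le_mul_measure_sub_inter_slab volume ℓ.toLinearMap.toAddMonoidHom _ hs
    hbound
  rw [ball_sub_ball (half_pos hr) (half_pos hr), sub_zero, add_halves,
    Real.volume_pi_ball 0 (half_pos hr), mul_div_cancel₀ r two_ne_zero] at hpigeon
  have hcount : ((2 * ⌈‖ℓ‖ * (r / 2) / s⌉₊ + 1 : ℕ) : ℝ≥0∞) ≤
      ENNReal.ofReal ((‖ℓ‖ * r + 3 * s) / s) := by
    have hceil := (Nat.ceil_lt_add_one (a := ‖ℓ‖ * (r / 2) / s) (by positivity)).le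
    have hsplit : (‖ℓ‖ * r + 3 * s) / s = 2 * (‖ℓ‖ * (r / 2) / s + 1) + 1 := by
      field_simp
      ring
    rw [← ENNReal.ofReal_natCast]
    refine ENNReal.ofReal_le_ofReal ?_
    push_cast
    linarith
  have hpos : 0 < (‖ℓ‖ * r + 3 * s) / s := by positivity
  rw [← inv_div, inv_mul_eq_div, ENNReal.ofReal_div_of_pos hpos]
  exact ENNReal.div_le_of_le_mul' (hpigeon.trans (mul_le_mul' hcount le_rfl))

end Slab

section RealDiagonal

variable {ι : Type*}

/-- The real-linear map `x ↦ (x j * u j)` from `ℝⁿ` to `ℂⁿ`. At a point `ζ` of the torus its image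
is the space of normal directions for `u = ζ` and that of tangent directions for `u = i ζ`. -/
def realDiagonal (u : ι → ℂ) : (ι → ℝ) →L[ℝ] (ι → ℂ) :=
  .pi fun j => (ContinuousLinearMap.proj j).smulRight (u j)

theorem norm_realDiagonal_apply_le [Fintype ι] {u : ι → ℂ} (hu : ‖u‖ ≤ 1) (x : ι → ℝ) :
    ‖realDiagonal u x‖ ≤ ‖x‖ := by
  refine (pi_norm_le_iff_of_nonneg (norm_nonneg x)).2 fun j => ?_
  calc ‖x j • u j‖ = ‖x j‖ * ‖u j‖ := norm_smul _ _
    _ ≤ ‖x‖ * 1 := by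
      gcongr
      exacts [norm_le_pi_norm x j, (norm_le_pi_norm u j).trans hu]
    _ = ‖x‖ := mul_one _

/-- Coordinates of `ℂⁿ` centred at a point `ζ` of the torus: `p.1` is the inward normal component
and `p.2` the tangential one. -/
def torusChart (ζ : ι → ℂ) (p : (ι → ℝ) × (ι → ℝ)) : ι → ℂ :=
  fun j => ζ j * (1 - (p.1 j + p.2 j * Complex.I))

theorem torusChart_sub (ζ : ι → ℂ) (p : (ι → ℝ) × (ι → ℝ)) :
    torusChart ζ p - ζ = -(realDiagonal ζ p.1 + realDiagonal (Complex.I • ζ) p.2) := by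
  ext j
  simp only [torusChart, realDiagonal, Pi.sub_apply, Pi.neg_apply, Pi.add_apply, Pi.smul_apply,
    ContinuousLinearMap.coe_pi', ContinuousLinearMap.smulRight_apply,
    ContinuousLinearMap.proj_apply, Complex.real_smul, smul_eq_mul]
  ring

theorem measurePreserving_torusChart [Fintype ι] {ζ : ι → ℂ} (hζ : ∀ j, ‖ζ j‖ = 1) :
    MeasurePreserving (torusChart ζ) := by
  have hcoord (j : ι) :
      MeasurePreserving fun q : ℝ × ℝ => ζ j * (1 - (q.1 + q.2 * Complex.I)) := by
    have hrot := (rotation ⟨ζ j, mem_sphere_zero_iff_norm.2 (hζ j)⟩).measurePreserving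
    have hsub := (volume : Measure ℂ).measurePreserving_sub_left 1
    convert! (hrot.comp hsub).comp (Complex.volume_preserving_equiv_real_prod.symm _) using 2 with q
    simp only [Function.comp_apply, Complex.measurableEquivRealProd_symm_apply,
      Complex.mk_eq_add_mul_I]
    rfl
  exact (volume_preserving_pi hcoord).comp
    ((volume_measurePreserving_arrowProdEquivProdArrow ℝ ℝ ι).symm _)

end RealDiagonal

section Polydisc

variable {n : ℕ} {ζ : Fin n → ℂ}

theorem polydisc_eq_ball (n : ℕ) : polydisc n = ball 0 1 := by
  ext z
  simp [polydisc, pi_norm_lt_iff]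

theorem closedPolydisc_eq_closedBall (n : ℕ) : closedPolydisc n = closedBall 0 1 := by
  ext z
  simp [closedPolydisc, pi_norm_le_iff_of_nonneg]

theorem polydisc_subset_closedPolydisc (n : ℕ) : polydisc n ⊆ closedPolydisc n :=
  fun _ hz j => (hz j).le

theorem torus_subset_closedPolydisc (n : ℕ) : torus n ⊆ closedPolydisc n :=
  fun _ hz j => (hz j).le

theorem convex_closedPolydisc (n : ℕ) : Convex ℝ (closedPolydisc n) :=
  closedPolydisc_eq_closedBall n ▸ convex_closedBall 0 1

theorem closure_polydisc (n : ℕ) : closure (polydisc n) = closedPolydisc n := by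
  rw [polydisc_eq_ball, closedPolydisc_eq_closedBall, closure_ball 0 one_ne_zero]

theorem openSegment_subset_polydisc {z w : Fin n → ℂ} (hz : z ∈ closedPolydisc n)
    (hw : w ∈ polydisc n) : openSegment ℝ z w ⊆ polydisc n := by
  rw [← closure_polydisc] at hz
  rw [polydisc_eq_ball] at *
  have hw' : w ∈ interior (ball 0 1) := by rwa [isOpen_ball.interior_eq]
  exact ((convex_ball 0 1).openSegment_closure_interior_subset_interior hz hw').trans
    interior_subset

theorem norm_le_one_of_mem_torus (hζ : ζ ∈ torus n) : ‖ζ‖ ≤ 1 :=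
  (pi_norm_le_iff_of_nonneg zero_le_one).2 fun j => (hζ j).le

theorem torusChart_mem_polydisc (hζ : ζ ∈ torus n) {p : (Fin n → ℝ) × (Fin n → ℝ)}
    (hp : ∀ j, p.1 j ^ 2 + p.2 j ^ 2 < 2 * p.1 j) : torusChart ζ p ∈ polydisc n := by
  intro j
  rw [torusChart, norm_mul, hζ j, one_mul, ← sq_lt_one_iff₀ (norm_nonneg _), Complex.sq_norm,
    Complex.normSq_apply]
  have hre : (1 - (p.1 j + p.2 j * Complex.I)).re = 1 - p.1 j := by simp
  have him : (1 - (p.1 j + p.2 j * Complex.I)).im = -p.2 j := by simp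
  rw [hre, him]
  linarith [hp j]

theorem apply_tangent_eq_zero_of_apply_sub_nonpos {φ : (Fin n → ℂ) →L[ℝ] ℝ} (hζ : ζ ∈ torus n)
    (hφ : ∀ z ∈ polydisc n, φ (z - ζ) ≤ 0) (y : Fin n → ℝ) :
    φ (realDiagonal (Complex.I • ζ) y) = 0 := by
  suffices h : ∀ y, 0 ≤ φ (realDiagonal (Complex.I • ζ) y) from
    le_antisymm (by simpa using h (-y)) (h y)
  intro y
  set A := ‖y‖ ^ 2 + 1
  have hA : 0 < A := by positivity
  have hsmall : ∀ᶠ t in 𝓝[>] (0 : ℝ),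
      0 ≤ t * (A * φ (realDiagonal ζ 1)) + φ (realDiagonal (Complex.I • ζ) y) := by
    filter_upwards [Ioo_mem_nhdsGT (inv_pos.2 hA)] with t ⟨ht, htA⟩
    have hmem : torusChart ζ ((A * t ^ 2) • 1, t • y) ∈ polydisc n := by
      refine torusChart_mem_polydisc hζ fun j => ?_
      have hy : y j ^ 2 ≤ ‖y‖ ^ 2 := sq_le_sq.2 (by simpa using norm_le_pi_norm y j)
      have htA' : (t * A) ^ 2 < 1 := by
        rw [sq_lt_one_iff₀ (by positivity)]
        exact (lt_inv_mul_iff₀' hA).1 (by simpa using htA)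
      simp only [Pi.smul_apply, Pi.one_apply, smul_eq_mul, mul_one]
      nlinarith
    have h := hφ _ hmem
    rw [torusChart_sub] at h
    simp only [map_neg, map_add, map_smul, smul_eq_mul] at h
    refine nonneg_of_mul_nonneg_right (a := t) ?_ ht
    linarith
  refine ge_of_tendsto ?_ hsmall
  have : Continuous fun t : ℝ =>
    t * (A * φ (realDiagonal ζ 1)) + φ (realDiagonal (Complex.I • ζ) y) := by fun_prop
  simpa using (this.tendsto 0).mono_left nhdsWithin_le_nhds

end Polydisc

section ParabolicBox

variable {ι F : Type*} [Fintype ι] {ℓ : (ι → ℝ) →L[ℝ] ℝ} {r : ℝ} {p : (ι → ℝ) × (ι → ℝ)}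

/-- The anisotropic box of height `r ^ 2` in the normal coordinates `p.1` and of width `r` in the
tangential coordinates `p.2`, cut by the slab `|ℓ p.2| < r ^ 2`. Keeping `p.1 j` above `r ^ 2` puts
its image under `torusChart ζ` inside the polydisc for small `r`. -/
def parabolicBox (ℓ : (ι → ℝ) →L[ℝ] ℝ) (r : ℝ) : Set ((ι → ℝ) × (ι → ℝ)) :=
  (univ.pi fun _ => Ioo (r ^ 2) (2 * r ^ 2)) ×ˢ (ball 0 r ∩ {y | |ℓ y| < r ^ 2})

theorem le_volume_parabolicBox (ℓ : (ι → ℝ) →L[ℝ] ℝ) (hr : 0 < r) (hr1 : r ≤ 1) :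
    ENNReal.ofReal (1 / (‖ℓ‖ + 3) * r ^ (3 * Fintype.card ι + 1)) ≤ volume (parabolicBox ℓ r) := by
  have hnormal : volume (univ.pi fun _ : ι => Ioo (r ^ 2) (2 * r ^ 2)) =
      ENNReal.ofReal ((r ^ 2) ^ Fintype.card ι) := by
    rw [Real.volume_pi_Ioo, Finset.prod_const, Finset.card_univ, ENNReal.ofReal_pow (by positivity),
      two_mul, add_sub_cancel_right]
  have hslab : r / (‖ℓ‖ + 3) ≤ r ^ 2 / (‖ℓ‖ * r + 3 * r ^ 2) := by
    rw [div_le_div_iff₀ (by positivity) (by positivity)]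
    nlinarith [pow_pos hr 2, pow_pos hr 3]
  rw [parabolicBox, Measure.volume_eq_prod, Measure.prod_prod, hnormal]
  calc ENNReal.ofReal (1 / (‖ℓ‖ + 3) * r ^ (3 * Fintype.card ι + 1))
      = ENNReal.ofReal ((r ^ 2) ^ Fintype.card ι) *
          ENNReal.ofReal (r / (‖ℓ‖ + 3) * r ^ Fintype.card ι) := by
        rw [← ENNReal.ofReal_mul (by positivity)]
        congr 1
        ring
    _ ≤ ENNReal.ofReal ((r ^ 2) ^ Fintype.card ι) * volume (ball 0 r ∩ {y | |ℓ y| < r ^ 2}) := by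
        gcongr
        refine (ENNReal.ofReal_le_ofReal ?_).trans
          (le_volume_ball_inter_slab ℓ hr (pow_pos hr 2))
        gcongr

theorem norm_fst_le_of_mem_parabolicBox (hp : p ∈ parabolicBox ℓ r) : ‖p.1‖ ≤ 2 * r ^ 2 := by
  refine (pi_norm_le_iff_of_nonneg (by positivity)).2 fun j => ?_
  obtain ⟨hlow, hupp⟩ := hp.1 j (mem_univ j)
  exact abs_le.2 ⟨by nlinarith, hupp.le⟩

theorem norm_snd_lt_of_mem_parabolicBox (hp : p ∈ parabolicBox ℓ r) : ‖p.2‖ < r :=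
  mem_ball_zero_iff.1 hp.2.1

theorem norm_torusChart_sub_lt {ζ : ι → ℂ} (hζ : ‖ζ‖ ≤ 1) (hr : r ≤ 1 / 2)
    (hp : p ∈ parabolicBox ℓ r) : ‖torusChart ζ p - ζ‖ < 2 * r := by
  have hy := norm_snd_lt_of_mem_parabolicBox hp
  have hr0 : 0 < r := (norm_nonneg _).trans_lt hy
  have hIζ : ‖Complex.I • ζ‖ ≤ 1 := by rwa [norm_smul, Complex.norm_I, one_mul]
  calc ‖torusChart ζ p - ζ‖
      = ‖realDiagonal ζ p.1 + realDiagonal (Complex.I • ζ) p.2‖ := by rw [torusChart_sub, norm_neg]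
    _ ≤ ‖p.1‖ + ‖p.2‖ := norm_add_le_of_le (norm_realDiagonal_apply_le hζ _)
        (norm_realDiagonal_apply_le hIζ _)
    _ < 2 * r ^ 2 + r := add_lt_add_of_le_of_lt (norm_fst_le_of_mem_parabolicBox hp) hy
    _ ≤ 2 * r := by nlinarith

theorem norm_apply_torusChart_sub_le [NormedAddCommGroup F] [NormedSpace ℝ F] {ζ : ι → ℂ}
    {L : (ι → ℂ) →L[ℝ] F} (hζ : ‖ζ‖ ≤ 1)
    (hℓ : ∀ y, ‖L (realDiagonal (Complex.I • ζ) y)‖ ≤ |ℓ y|) (hp : p ∈ parabolicBox ℓ r) :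
    ‖L (torusChart ζ p - ζ)‖ ≤ (2 * ‖L‖ + 1) * r ^ 2 := by
  have hx : ‖L (realDiagonal ζ p.1)‖ ≤ ‖L‖ * (2 * r ^ 2) := L.le_opNorm_of_le <|
    (norm_realDiagonal_apply_le hζ _).trans (norm_fst_le_of_mem_parabolicBox hp)
  have hy : ‖L (realDiagonal (Complex.I • ζ) p.2)‖ ≤ r ^ 2 := (hℓ p.2).trans (le_of_lt hp.2.2)
  rw [torusChart_sub, map_neg, norm_neg, map_add]
  calc _ ≤ ‖L‖ * (2 * r ^ 2) + r ^ 2 := norm_add_le_of_le hx hy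
    _ = (2 * ‖L‖ + 1) * r ^ 2 := by ring

theorem torusChart_mem_polydisc_of_mem_parabolicBox {n : ℕ} {ζ : Fin n → ℂ}
    {ℓ : (Fin n → ℝ) →L[ℝ] ℝ} {p : (Fin n → ℝ) × (Fin n → ℝ)} (hζ : ζ ∈ torus n)
    (hr : r ≤ 1 / 2) (hp : p ∈ parabolicBox ℓ r) : torusChart ζ p ∈ polydisc n := by
  have hr0 : 0 < r := (norm_nonneg _).trans_lt (norm_snd_lt_of_mem_parabolicBox hp)
  refine torusChart_mem_polydisc hζ fun j => ?_
  obtain ⟨hlow, hupp⟩ := hp.1 j (mem_univ j)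
  have hx : p.1 j ^ 2 ≤ (2 * r ^ 2) ^ 2 := by gcongr; exact (pow_pos hr0 2).le.trans hlow.le
  have hy : p.2 j ^ 2 ≤ r ^ 2 := sq_le_sq.2 <| by
    rw [abs_of_pos hr0]
    exact (norm_le_pi_norm p.2 j).trans (norm_snd_lt_of_mem_parabolicBox hp).le
  have hr2 : r ^ 2 ≤ (1 / 2) ^ 2 := by gcongr
  nlinarith

theorem exists_mapsTo_torusChart_sublevel [NormedAddCommGroup F] [NormedSpace ℝ F] {n : ℕ}
    {ζ : Fin n → ℂ} {f : (Fin n → ℂ) → F} {L : (Fin n → ℂ) →L[ℝ] F} {ℓ : (Fin n → ℝ) →L[ℝ] ℝ}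
    (hζ : ζ ∈ torus n)
    (hL : (fun z => f z - f ζ - L (z - ζ)) =O[𝓝[polydisc n] ζ] fun z => ‖z - ζ‖ ^ 2)
    (hℓ : ∀ y, ‖L (realDiagonal (Complex.I • ζ) y)‖ ≤ |ℓ y|) :
    ∃ B > 0, ∀ᶠ r in 𝓝[>] (0 : ℝ), MapsTo (torusChart ζ) (parabolicBox ℓ r)
      {z | z ∈ polydisc n ∧ ‖f z - f ζ‖ ≤ B * r ^ 2} := by
  obtain ⟨C, hC, hLC⟩ := hL.exists_pos
  rw [isBigOWith_iff] at hLC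
  obtain ⟨ρ, hρ, hball⟩ := mem_nhdsWithin_iff.1 hLC
  refine ⟨4 * C + (2 * ‖L‖ + 1), by positivity, ?_⟩
  filter_upwards [Ioo_mem_nhdsGT (half_pos hρ), Ioo_mem_nhdsGT one_half_pos]
    with r ⟨_, hrρ⟩ ⟨_, hr2⟩ p hp
  have hmem := torusChart_mem_polydisc_of_mem_parabolicBox hζ hr2.le hp
  have hζ' := norm_le_one_of_mem_torus hζ
  have hdist := norm_torusChart_sub_lt hζ' hr2.le hp
  have herror : ‖f (torusChart ζ p) - f ζ - L (torusChart ζ p - ζ)‖ ≤ C * (2 * r) ^ 2 := by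
    refine (hball ⟨mem_ball_iff_norm.2 (by linarith), hmem⟩).trans ?_
    rw [norm_pow, norm_norm]
    gcongr
  refine ⟨hmem, ?_⟩
  calc ‖f (torusChart ζ p) - f ζ‖
      ≤ ‖f (torusChart ζ p) - f ζ - L (torusChart ζ p - ζ)‖ + ‖L (torusChart ζ p - ζ)‖ :=
        norm_le_norm_sub_add _ _
    _ ≤ C * (2 * r) ^ 2 + (2 * ‖L‖ + 1) * r ^ 2 :=
        add_le_add herror (norm_apply_torusChart_sub_le hζ' hℓ hp)
    _ = (4 * C + (2 * ‖L‖ + 1)) * r ^ 2 := by ring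

end ParabolicBox

theorem exists_ofReal_mul_rpow_le_of_eventually_sq {V : ℝ → ℝ≥0∞} {a B c : ℝ} (hB : 0 < B)
    (hc : 0 < c) (hV : ∀ᶠ r in 𝓝[>] (0 : ℝ), ENNReal.ofReal (c * r ^ a) ≤ V (B * r ^ 2)) :
    ∃ c' > (0 : ℝ), ∃ δ₀ > (0 : ℝ), ∀ δ : ℝ, 0 < δ → δ < δ₀ →
      ENNReal.ofReal (c' * δ ^ (a / 2)) ≤ V δ := by
  obtain ⟨r₀, hr₀, hsub⟩ := mem_nhdsGT_iff_exists_Ioo_subset.1 hV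
  refine ⟨c / B ^ (a / 2), by positivity, B * r₀ ^ 2, mul_pos hB (pow_pos hr₀ 2),
    fun δ hδ hδ₀ => ?_⟩
  have hlt : √(δ / B) < r₀ := by
    rw [Real.sqrt_lt' hr₀, div_lt_iff₀' hB]
    exact hδ₀
  have h := hsub ⟨Real.sqrt_pos.2 (div_pos hδ hB), hlt⟩
  rw [mem_ofPred_eq, Real.sq_sqrt (by positivity), mul_div_cancel₀ _ hB.ne',
    ← Real.rpow_div_two_eq_sqrt _ (by positivity), Real.div_rpow hδ.le hB.le] at h
  rwa [div_mul_eq_mul_div, mul_div_assoc]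

theorem sublevel_lower_bound_general {n : ℕ} {f : (Fin n → ℂ) → ℂ} {ζ : Fin n → ℂ}
    {L : (Fin n → ℂ) →L[ℝ] ℂ} (hζ : ζ ∈ torus n) (hfζ : ‖f ζ‖ = 1)
    (hmap : ∀ᶠ z in 𝓝[polydisc n] ζ, ‖f z‖ ≤ 1)
    (hL : (fun z => f z - f ζ - L (z - ζ)) =O[𝓝[polydisc n] ζ] fun z => ‖z - ζ‖ ^ 2) :
    ∃ c > (0 : ℝ), ∃ δ₀ > (0 : ℝ), ∀ δ : ℝ, 0 < δ → δ < δ₀ →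
      ENNReal.ofReal (c * δ ^ ((3 * (n : ℝ) + 1) / 2)) ≤
        volume {z | z ∈ polydisc n ∧ ‖f z - f ζ‖ ≤ δ} := by
  have hderiv : HasFDerivWithinAt f L (polydisc n) ζ :=
    .of_isLittleO <| hL.trans_isLittleO <|
      (isLittleO_pow_sub_sub ζ one_lt_two).mono nhdsWithin_le_nhds
  have hinward : ∀ z ∈ polydisc n, ⟪f ζ, L (z - ζ)⟫ ≤ 0 := fun z hz =>
    inner_apply_sub_nonpos_of_openSegment_subset hderiv (by rwa [hfζ])
      (openSegment_subset_polydisc (torus_subset_closedPolydisc n hζ) hz)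
  obtain ⟨ℓ, hℓ⟩ := exists_continuousLinearMap_norm_apply_eq_abs
    (T := L ∘L realDiagonal (Complex.I • ζ)) hfζ
    (apply_tangent_eq_zero_of_apply_sub_nonpos (φ := innerSL ℝ (f ζ) ∘L L) hζ hinward)
  obtain ⟨B, hB, hbox⟩ := exists_mapsTo_torusChart_sublevel hζ hL fun y => (hℓ y).le
  refine exists_ofReal_mul_rpow_le_of_eventually_sq (c := 1 / (‖ℓ‖ + 3)) hB (by positivity) ?_
  filter_upwards [hbox, Ioo_mem_nhdsGT one_pos] with r hmaps ⟨hr, hr1⟩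
  calc ENNReal.ofReal (1 / (‖ℓ‖ + 3) * r ^ (3 * (n : ℝ) + 1))
      ≤ volume (parabolicBox ℓ r) := by
        simpa [← Real.rpow_natCast] using le_volume_parabolicBox ℓ hr hr1.le
    _ ≤ volume (torusChart ζ ⁻¹' {z | z ∈ polydisc n ∧ ‖f z - f ζ‖ ≤ B * r ^ 2}) :=
        measure_mono hmaps
    _ ≤ volume {z | z ∈ polydisc n ∧ ‖f z - f ζ‖ ≤ B * r ^ 2} :=
        (measurePreserving_torusChart hζ).measure_preimage_le _

theorem sublevel_lower_bound (n : ℕ) (f : (Fin n → ℂ) → ℂ)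
    (hhol : DifferentiableOn ℂ f (polydisc n))
    (hsm : ContDiffOn ℝ 2 f (closedPolydisc n))
    (hmap : ∀ z ∈ polydisc n, ‖f z‖ < 1)
    (ζ : Fin n → ℂ) (hζ : ζ ∈ torus n) (η : ℂ) (hη : ‖η‖ = 1) (hfζ : f ζ = η) :
    ∃ c > (0:ℝ), ∃ δ₀ > (0:ℝ), ∀ δ : ℝ, 0 < δ → δ < δ₀ →
      ENNReal.ofReal (c * δ ^ ((3 * (n:ℝ) + 1) / 2)) ≤
        volume {z | z ∈ polydisc n ∧ ‖f z - η‖ ≤ δ} := by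
  subst hfζ
  have hζ' := torus_subset_closedPolydisc n hζ
  obtain ⟨L, hL⟩ := exists_sub_sub_isBigO_sq (convex_closedPolydisc n) hζ' (hsm ζ hζ')
  exact sublevel_lower_bound_general hζ hη
    (eventually_nhdsWithin_of_forall fun z hz => (hmap z hz).le)
    (hL.mono (nhdsWithin_mono ζ (polydisc_subset_closedPolydisc n)))

end
end

section
/- Let α_1,…,α_n ∈ ℂ with Σ_j |α_j| = 1 and α_j ≠ 0 for all j, let g : 𝔻ⁿ → 𝔻 be given by g(z) = α_1 z_1ⁿ + … + α_n z_nⁿ, and let β > -1. Then for every η ∈ 𝕋 there exist constants c, C > 0 such that for all sufficiently small δ > 0: c·δ^{n(β+1)+(n+1)/2} ≤ V_β({z ∈ 𝔻ⁿ : |g(z) - η| ≤ δ}) ≤ C·δ^{n(β+1)+(n+1)/2}. -/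
open MeasureTheory Metric Set ENNReal

noncomputable section

/-- The weighted Bergman measure `V_β` on the polydisc: the product of the measures
`dA_β(z) = (β+1)(1-|z|²)^β dA(z)`, where `dA` is normalized area measure on the unit disc. -/
def Vbeta (n : ℕ) (β : ℝ) : Measure (Fin n → ℂ) :=
  (volume.restrict (polydisc n)).withDensity
    (fun z => ENNReal.ofReal (∏ j, ((β + 1) * (1 - ‖z j‖ ^ 2) ^ β / Real.pi)))

/-!
Rotating the coordinates turns `α j` into `‖α j‖` and `η` into `1`, so the sum becomes a convex
combination of the points `w j = z j ^ p j` of the closed unit disc. The point `1` is extreme: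
if the combination is within `δ` of `1`, then every `1 - re (w j)` is `O(δ)`, which places `z j` at
distance `O(δ)` from the unit circle and its argument in `p j` arcs of length `O(√δ)`. Such a set
has `A_β`-measure `O(δ ^ (β + 1) * √δ)`. Once the other coordinates are fixed, `z 0 ^ p 0` is even
confined to a disc of radius `O(δ)`, which improves the bound for that coordinate to
`O(δ ^ (β + 1) * δ)`. Multiplying gives the exponent `n (β + 1) + (n - 1) / 2 + 1`.

Conversely, if all coordinates but the first satisfy `1 - re (z j) ≤ κ δ` with `κ` small, the value
that `w 0` needs for the sum to be exactly `1` differs from some point of the unit circle by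
`O(κ δ)`: its distance to the circle is of second order in the arguments of the other `w j`.
So `z 0` still ranges over a region of `A_β`-measure of order `δ ^ (β + 1) * δ`.
-/

lemma norm_sub_one_sq (w : ℂ) : ‖w - 1‖ ^ 2 = ‖w‖ ^ 2 - 2 * w.re + 1 := by
  simpa using norm_sub_sq_real w 1

lemma norm_sub_one_le_sqrt {w : ℂ} (hw : ‖w‖ ≤ 1) : ‖w - 1‖ ≤ √(2 * (1 - w.re)) := by
  refine Real.le_sqrt_of_sq_le ?_
  rw [norm_sub_one_sq]
  linarith [pow_le_one₀ (norm_nonneg w) hw (n := 2)]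

lemma norm_pow_sub_pow_le {z w : ℂ} (hz : ‖z‖ ≤ 1) (hw : ‖w‖ ≤ 1) (n : ℕ) :
    ‖z ^ n - w ^ n‖ ≤ n * ‖z - w‖ := by
  refine (convex_closedBall (0 : ℂ) 1).norm_image_sub_le_of_norm_deriv_le (f := (· ^ n))
    (fun _ _ ↦ by fun_prop) (fun x hx ↦ ?_) (by simpa using hw) (by simpa using hz)
  have hx : ‖x‖ ≤ 1 := by simpa using hx
  simpa using mul_le_of_le_one_right n.cast_nonneg (pow_le_one₀ (norm_nonneg x) hx)

lemma one_sub_re_pow_le {z : ℂ} (hz : ‖z‖ ≤ 1) (n : ℕ) :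
    1 - (z ^ n).re ≤ n ^ 2 * (1 - z.re) := by
  have chord (w : ℂ) : 1 - w.re = (‖w - 1‖ ^ 2 + (1 - ‖w‖ ^ 2)) / 2 := by
    rw [norm_sub_one_sq]; ring
  have lipschitz : ‖z ^ n - 1‖ ^ 2 ≤ n ^ 2 * ‖z - 1‖ ^ 2 := by
    rw [← mul_pow]
    gcongr
    simpa using norm_pow_sub_pow_le hz norm_one.le n
  have bernoulli : 1 - ‖z ^ n‖ ^ 2 ≤ n * (1 - ‖z‖ ^ 2) := by
    have := one_add_mul_sub_le_pow (a := ‖z‖ ^ 2) (by linarith [sq_nonneg ‖z‖]) n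
    rw [norm_pow, pow_right_comm]
    linarith
  have n_le_sq : (n : ℝ) ≤ n ^ 2 := by exact_mod_cast Nat.le_self_pow two_ne_zero n
  have : 0 ≤ 1 - ‖z‖ ^ 2 := sub_nonneg.2 (pow_le_one₀ (norm_nonneg z) hz)
  calc 1 - (z ^ n).re
      = (‖z ^ n - 1‖ ^ 2 + (1 - ‖z ^ n‖ ^ 2)) / 2 := chord _
    _ ≤ (n ^ 2 * ‖z - 1‖ ^ 2 + n ^ 2 * (1 - ‖z‖ ^ 2)) / 2 := by
        gcongr
        exact bernoulli.trans (by gcongr)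
    _ = n ^ 2 * (1 - z.re) := by rw [chord z]; ring

lemma exists_norm_eq_one_norm_one_add_sub_le {s : ℂ} (hs : 0 ≤ s.re) :
    ∃ v : ℂ, ‖v‖ = 1 ∧ ‖1 + s - v‖ ≤ s.re + ‖s‖ ^ 2 / 2 := by
  have h1 : 1 ≤ ‖1 + s‖ := (by simpa using hs : (1 : ℝ) ≤ (1 + s).re).trans (Complex.re_le_norm _)
  have h0 : ‖1 + s‖ ≠ 0 := by positivity
  have hsq : ‖1 + s‖ ^ 2 = 1 + 2 * s.re + ‖s‖ ^ 2 := by simpa using norm_add_sq_real (1 : ℂ) s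
  refine ⟨‖1 + s‖⁻¹ • (1 + s), by rw [norm_smul, norm_inv, norm_norm, inv_mul_cancel₀ h0], ?_⟩
  calc ‖1 + s - ‖1 + s‖⁻¹ • (1 + s)‖
      = ‖(1 - ‖1 + s‖⁻¹) • (1 + s)‖ := by rw [sub_smul, one_smul]
    _ = (1 - ‖1 + s‖⁻¹) * ‖1 + s‖ := by
        rw [norm_smul, Real.norm_of_nonneg (sub_nonneg.2 (inv_le_one_of_one_le₀ h1))]
    _ = ‖1 + s‖ - 1 := by rw [sub_mul, one_mul, inv_mul_cancel₀ h0]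
    _ ≤ s.re + ‖s‖ ^ 2 / 2 := by linarith [sq_nonneg (‖1 + s‖ - 1)]

section ConvexCombination

variable {ι : Type*} [Fintype ι] {a : ι → ℝ} {w : ι → ℂ}

lemma mul_one_sub_re_le_norm_sum_sub_one (ha : ∀ j, 0 ≤ a j) (hsum : ∑ j, a j = 1)
    (hw : ∀ j, (w j).re ≤ 1) (k : ι) :
    a k * (1 - (w k).re) ≤ ‖∑ j, a j * w j - 1‖ :=
  calc a k * (1 - (w k).re)
      ≤ ∑ j, a j * (1 - (w j).re) :=
        Finset.single_le_sum (f := fun j ↦ a j * (1 - (w j).re))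
          (fun j _ ↦ mul_nonneg (ha j) (sub_nonneg.2 (hw j))) (Finset.mem_univ k)
    _ = (1 - ∑ j, a j * w j : ℂ).re := by simp [mul_sub, Finset.sum_sub_distrib, hsum]
    _ ≤ ‖∑ j, a j * w j - 1‖ := norm_sub_rev (1 : ℂ) _ ▸ Complex.re_le_norm _

lemma sum_mul_le_of_sum_le_one (ha : ∀ j, 0 ≤ a j) (hsum : ∑ j, a j ≤ 1) {x : ι → ℝ} {y : ℝ}
    (hy : 0 ≤ y) (hx : ∀ j, x j ≤ y) : ∑ j, a j * x j ≤ y :=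
  calc ∑ j, a j * x j ≤ ∑ j, a j * y := by gcongr with j; exacts [ha j, hx j]
    _ ≤ y := by rw [← Finset.sum_mul]; exact mul_le_of_le_one_left hy hsum

lemma norm_sum_mul_one_sub_le (ha : ∀ j, 0 ≤ a j) (hsum : ∑ j, a j ≤ 1) {τ : ℝ}
    (hw : ∀ j, ‖w j‖ ≤ 1) (hτ : ∀ j, 1 - (w j).re ≤ τ) :
    ‖∑ j, a j * (1 - w j)‖ ≤ √(2 * τ) := by
  refine (norm_sum_le _ _).trans ?_
  simp only [norm_mul, Complex.norm_of_nonneg (ha _), norm_sub_rev (1 : ℂ)]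
  exact sum_mul_le_of_sum_le_one ha hsum (Real.sqrt_nonneg _) fun j ↦
    (norm_sub_one_le_sqrt (hw j)).trans (Real.sqrt_le_sqrt (by linarith [hτ j]))

lemma exists_norm_eq_one_norm_add_sum_sub_one_le {a₀ τ : ℝ} (ha₀ : 0 < a₀) (ha : ∀ j, 0 ≤ a j)
    (hsum : a₀ + ∑ j, a j = 1) (hw : ∀ j, ‖w j‖ ≤ 1) (hτ₀ : 0 ≤ τ) (hτ : ∀ j, 1 - (w j).re ≤ τ) :
    ∃ v : ℂ, ‖v‖ = 1 ∧ ‖a₀ * v + ∑ j, a j * w j - 1‖ ≤ 2 * τ / a₀ := by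
  have hsum_nonneg : 0 ≤ ∑ j, a j := Finset.sum_nonneg fun j _ ↦ ha j
  have hsum_le : ∑ j, a j ≤ 1 := by linarith
  have hsum' : (∑ j, a j : ℂ) = 1 - a₀ := by exact_mod_cast eq_sub_of_add_eq' hsum
  set S : ℂ := ∑ j, a j * (1 - w j) with hS
  have hSre : S.re = ∑ j, a j * (1 - (w j).re) := by simp [hS]
  have hSre_nonneg : 0 ≤ S.re := hSre ▸ Finset.sum_nonneg fun j _ ↦
    mul_nonneg (ha j) (sub_nonneg.2 ((Complex.re_le_norm _).trans (hw j)))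
  have hSre_le : S.re ≤ τ := hSre ▸ sum_mul_le_of_sum_le_one ha hsum_le hτ₀ hτ
  have hS_le : ‖S‖ ≤ √(2 * τ) := norm_sum_mul_one_sub_le ha hsum_le hw hτ
  obtain ⟨v, hv, hvS⟩ := exists_norm_eq_one_norm_one_add_sub_le
    (s := S / a₀) (by rw [Complex.div_ofReal_re]; positivity)
  refine ⟨v, hv, ?_⟩
  have ha₀' : (a₀ : ℂ) ≠ 0 := mod_cast ha₀.ne'
  calc ‖a₀ * v + ∑ j, a j * w j - 1‖
      = ‖a₀ * (1 + S / a₀ - v)‖ := by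
        rw [← norm_neg, hS]
        simp only [mul_sub, Finset.sum_sub_distrib, mul_one, hsum']
        congr 1
        field
    _ = a₀ * ‖1 + S / a₀ - v‖ := by
        rw [norm_mul, Complex.norm_of_nonneg ha₀.le]
    _ ≤ a₀ * (τ / a₀ + (√(2 * τ) / a₀) ^ 2 / 2) := by
        gcongr
        refine hvS.trans ?_
        rw [Complex.div_ofReal_re, norm_div, Complex.norm_of_nonneg ha₀.le]
        gcongr
    _ = τ + τ / a₀ := by
        rw [div_pow, Real.sq_sqrt (by positivity)]
        field
    _ ≤ τ / a₀ + τ / a₀ := by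
        gcongr
        exact le_div_self hτ₀ ha₀ (by linarith)
    _ = 2 * τ / a₀ := by ring

end ConvexCombination

lemma volume_le_of_forall_dist_le {a ℓ d : ℝ} (N : ℕ) {S : Set ℝ} (hS : S ⊆ Ioc a (a + N * ℓ))
    (h : ∀ x ∈ S, ∀ y ∈ S, dist x y ≤ ℓ → dist x y ≤ d) : volume S ≤ N * ENNReal.ofReal d := by
  induction N generalizing S with
  | zero => simp_all
  | succ N ih =>
    have hlast : volume (S \ Iic (a + N * ℓ)) ≤ ENNReal.ofReal d := by
      refine (Real.volume_le_diam _).trans (Metric.ediam_le fun x hx y hy ↦ ?_)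
      rw [edist_dist]
      refine ENNReal.ofReal_le_ofReal (h x hx.1 y hy.1 ?_)
      have := (hS hx.1).2
      have := (hS hy.1).2
      have : a + N * ℓ < x := not_le.1 hx.2
      have : a + N * ℓ < y := not_le.1 hy.2
      push_cast at *
      rw [Real.dist_eq, abs_sub_le_iff]
      constructor <;> linarith
    calc volume S
        ≤ volume (S ∩ Iic (a + N * ℓ)) + volume (S \ Iic (a + N * ℓ)) :=
          measure_le_inter_add_sdiff _ _ _
      _ ≤ N * ENNReal.ofReal d + ENNReal.ofReal d := by
          gcongr
          exact ih (fun x hx ↦ ⟨(hS hx.1).1, hx.2⟩) fun x hx y hy ↦ h x hx.1 y hy.1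
      _ = (N + 1 : ℕ) * ENNReal.ofReal d := by push_cast; ring

lemma mul_abs_sub_le_norm_circleMap_sub {R x y : ℝ} (hR : 0 ≤ R) (hxy : |x - y| ≤ Real.pi) :
    2 / Real.pi * R * |x - y| ≤ ‖circleMap 0 R x - circleMap 0 R y‖ := by
  have jordan : 2 / Real.pi * |(x - y) / 2| ≤ |Real.sin ((x - y) / 2)| :=
    Real.mul_abs_le_abs_sin (by rw [abs_div, abs_two]; linarith)
  have hfactor : circleMap 0 R x - circleMap 0 R y =
      circleMap 0 R y * (Complex.exp (Complex.I * (x - y : ℝ)) - 1) := by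
    rw [mul_sub, mul_one, mul_comm Complex.I, circleMap_zero, circleMap_zero, mul_assoc,
      ← Complex.exp_add]
    push_cast
    ring_nf
  rw [hfactor, norm_mul, norm_circleMap_zero, abs_of_nonneg hR,
    Complex.norm_exp_I_mul_ofReal_sub_one, Real.norm_eq_abs, abs_mul, abs_two]
  rw [abs_div, abs_two] at jordan
  linear_combination 2 * R * jordan

lemma volume_circleMap_pow_mem_closedBall_le {p : ℕ} (hp : p ≠ 0) {r : ℝ} (hr : 0 < r) (ζ : ℂ)
    (ε : ℝ) : volume (Ioo (-Real.pi) Real.pi ∩ {θ | ‖circleMap 0 r θ ^ p - ζ‖ ≤ ε}) ≤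
      ENNReal.ofReal (2 * Real.pi * ε / r ^ p) := by
  have hp₀ : (0 : ℝ) < p := by positivity
  have hπ := Real.pi_pos
  have hcover : Ioo (-Real.pi) Real.pi ⊆
      Ioc (-Real.pi) (-Real.pi + (2 * p : ℕ) * (Real.pi / p)) := by
    refine Ioo_subset_Ioc_self.trans (Ioc_subset_Ioc_right (le_of_eq ?_))
    push_cast
    field
  refine (volume_le_of_forall_dist_le (d := Real.pi * ε / (p * r ^ p)) (2 * p)
    (inter_subset_left.trans hcover) fun x hx y hy hxy ↦ ?_).trans_eq ?_
  · rw [Real.dist_eq] at *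
    have hclose : ‖circleMap 0 r x ^ p - circleMap 0 r y ^ p‖ ≤ ε + ε :=
      (norm_sub_le_norm_sub_add_norm_sub _ ζ _).trans
        (add_le_add hx.2 (norm_sub_rev ζ _ ▸ hy.2))
    rw [circleMap_zero_pow, circleMap_zero_pow] at hclose
    have hfar := mul_abs_sub_le_norm_circleMap_sub (x := p * x) (y := p * y) (pow_pos hr p).le
      (by rwa [← mul_sub, abs_mul, abs_of_pos hp₀, ← le_div_iff₀' hp₀])
    rw [← mul_sub, abs_mul, abs_of_pos hp₀] at hfar
    rw [le_div_iff₀ (by positivity)]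
    have := hfar.trans hclose
    field_simp at this
    linarith
  · rw [← ENNReal.ofReal_natCast, ← ENNReal.ofReal_mul (by positivity)]
    congr 1
    push_cast
    field

section Pi

lemma lintegral_fin_prod_eq_prod {n : ℕ} {X : Fin n → Type*} [∀ i, MeasurableSpace (X i)]
    (μ : ∀ i, Measure (X i)) [∀ i, SigmaFinite (μ i)] {f : ∀ i, X i → ℝ≥0∞}
    (hf : ∀ i, Measurable (f i)) :
    ∫⁻ x, ∏ i, f i (x i) ∂Measure.pi μ = ∏ i, ∫⁻ x, f i x ∂μ i := by
  induction n with
  | zero => simp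
  | succ n ih =>
    calc ∫⁻ x, ∏ i, f i (x i) ∂Measure.pi μ
        = ∫⁻ x, f 0 x.1 * ∏ i : Fin n, f i.succ (x.2 i)
            ∂((μ 0).prod (Measure.pi fun i : Fin n ↦ μ i.succ)) := by
          rw [← ((measurePreserving_piFinSuccAbove μ 0).symm).lintegral_comp_emb
            (MeasurableEquiv.measurableEmbedding _)]
          simp_rw [MeasurableEquiv.piFinSuccAbove_symm_apply, Fin.insertNthEquiv,
            Fin.prod_univ_succ, Fin.insertNth_zero]
          simp only [Fin.zero_succAbove]
          rfl
      _ = (∫⁻ x, f 0 x ∂μ 0) * ∏ i : Fin n, ∫⁻ x, f i.succ x ∂μ i.succ := by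
          have hmeas : Measurable fun y : ∀ i : Fin n, X i.succ ↦ ∏ i, f i.succ (y i) := by
            fun_prop
          rw [lintegral_prod_mul (hf 0).aemeasurable hmeas.aemeasurable, ih _ fun i ↦ hf _]
      _ = ∏ i, ∫⁻ x, f i x ∂μ i := by rw [Fin.prod_univ_succ]

lemma lintegral_fintype_prod_eq_prod {ι : Type*} [Fintype ι] {X : ι → Type*}
    [∀ i, MeasurableSpace (X i)] (μ : ∀ i, Measure (X i)) [∀ i, SigmaFinite (μ i)]
    {f : ∀ i, X i → ℝ≥0∞} (hf : ∀ i, Measurable (f i)) :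
    ∫⁻ x, ∏ i, f i (x i) ∂Measure.pi μ = ∏ i, ∫⁻ x, f i x ∂μ i := by
  let e := (Fintype.equivFin ι).symm
  rw [← (measurePreserving_piCongrLeft _ e).lintegral_comp_emb
    (MeasurableEquiv.measurableEmbedding _)]
  simp_rw [← e.prod_comp, MeasurableEquiv.coe_piCongrLeft, Equiv.piCongrLeft_apply_apply]
  exact lintegral_fin_prod_eq_prod _ fun i ↦ hf _

lemma pi_withDensity {ι : Type*} [Fintype ι] {X : ι → Type*}
    [∀ i, MeasurableSpace (X i)] (μ : ∀ i, Measure (X i)) [∀ i, SigmaFinite (μ i)]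
    {f : ∀ i, X i → ℝ≥0∞} (hf : ∀ i, Measurable (f i))
    [∀ i, SigmaFinite ((μ i).withDensity (f i))] :
    Measure.pi (fun i ↦ (μ i).withDensity (f i)) =
      (Measure.pi μ).withDensity fun x ↦ ∏ i, f i (x i) := by
  refine Measure.pi_eq fun s hs ↦ ?_
  simp_rw [withDensity_apply _ (hs _), withDensity_apply _ (MeasurableSet.univ_pi hs),
    Measure.restrict_pi_pi]
  exact lintegral_fintype_prod_eq_prod _ hf

variable {m : ℕ} {X : Type*} [MeasurableSpace X] (μ : Fin (m + 1) → Measure X)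
  [∀ i, SigmaFinite (μ i)] {S : Set (Fin (m + 1) → X)} {E : Fin m → Set X} {A : ℝ≥0∞}

lemma pi_apply_eq_lintegral_cons (hS : MeasurableSet S) :
    Measure.pi μ S =
      ∫⁻ z, μ 0 {x | Fin.cons x z ∈ S} ∂Measure.pi fun j : Fin m ↦ μ j.succ := by
  have h := (measurePreserving_piFinSuccAbove μ 0).symm
  rw [← h.measure_preimage hS.nullMeasurableSet, Measure.prod_apply_symm (h.measurable hS)]
  simp [preimage, Fin.insertNthEquiv_zero, Fin.consEquiv]

lemma pi_le_mul_prod_of_cons_le (hS : MeasurableSet S) (hE : ∀ j, MeasurableSet (E j))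
    (hSE : ∀ z ∈ S, ∀ j : Fin m, z j.succ ∈ E j) (hA : ∀ z, μ 0 {x | Fin.cons x z ∈ S} ≤ A) :
    Measure.pi μ S ≤ A * ∏ j, μ j.succ (E j) := by
  rw [pi_apply_eq_lintegral_cons μ hS, ← Measure.pi_pi,
    ← lintegral_indicator_const (MeasurableSet.univ_pi hE)]
  refine lintegral_mono fun z ↦ ?_
  by_cases hz : z ∈ Set.pi univ E
  · rw [indicator_of_mem hz]
    exact hA z
  · have : {x | (Fin.cons x z : Fin (m + 1) → X) ∈ S} = ∅ :=
      eq_empty_of_forall_notMem fun x hx ↦ hz fun j _ ↦ by simpa using hSE _ hx j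
    simp [this]

lemma mul_prod_le_pi_of_le_cons (hS : MeasurableSet S) (hE : ∀ j, MeasurableSet (E j))
    (hA : ∀ z : Fin m → X, (∀ j, z j ∈ E j) → A ≤ μ 0 {x | Fin.cons x z ∈ S}) :
    A * ∏ j, μ j.succ (E j) ≤ Measure.pi μ S := by
  rw [pi_apply_eq_lintegral_cons μ hS, ← Measure.pi_pi,
    ← lintegral_indicator_const (MeasurableSet.univ_pi hE)]
  exact lintegral_mono (indicator_le fun z hz ↦ hA z fun j ↦ hz j (mem_univ j))

end Pi

lemma setLIntegral_comp_norm {f : ℝ → ℝ≥0∞} (hf : Measurable f) {A : Set ℂ}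
    (hA : MeasurableSet A) :
    ∫⁻ z in A, f ‖z‖ = ∫⁻ r in Ioi 0,
      ENNReal.ofReal r * f r * volume (Ioo (-Real.pi) Real.pi ∩ circleMap 0 r ⁻¹' A) := by
  calc ∫⁻ z in A, f ‖z‖
      = ∫⁻ q in Ioi 0 ×ˢ Ioo (-Real.pi) Real.pi,
          ENNReal.ofReal q.1 * A.indicator (fun z ↦ f ‖z‖) (circleMap 0 q.1 q.2) := by
        rw [← lintegral_indicator hA, ← Complex.lintegral_comp_polarCoord_symm]
        simp [circleMap_zero, Complex.polarCoord_symm_apply, Complex.exp_mul_I, polarCoord]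
    _ = ∫⁻ r in Ioi 0, ∫⁻ θ in Ioo (-Real.pi) Real.pi,
          ENNReal.ofReal r * A.indicator (fun z ↦ f ‖z‖) (circleMap 0 r θ) :=
        setLIntegral_prod _ (by fun_prop)
    _ = _ := by
        refine setLIntegral_congr_fun measurableSet_Ioi fun r (hr : 0 < r) ↦ ?_
        have hmeas : MeasurableSet (circleMap 0 r ⁻¹' A) := measurable_circleMap 0 r hA
        have hconst (θ : ℝ) : ENNReal.ofReal r * A.indicator (fun z ↦ f ‖z‖) (circleMap 0 r θ) =
            (circleMap 0 r ⁻¹' A).indicator (fun _ ↦ ENNReal.ofReal r * f r) θ := by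
          by_cases h : circleMap 0 r θ ∈ A <;> simp [h, abs_of_pos hr]
        simp_rw [hconst]
        rw [lintegral_indicator_const hmeas, Measure.restrict_apply hmeas, inter_comm]

/-- The one-variable weighted Bergman measure `dA_β(z) = (β+1)(1-|z|²)^β dA(z)` on the unit disc,
extended by zero to `ℂ`. As `volume` is Lebesgue measure, normalizing `dA` costs a factor `1/π`. -/
def Abeta (β : ℝ) : Measure ℂ :=
  (volume.restrict (ball 0 1)).withDensity
    fun z ↦ ENNReal.ofReal ((β + 1) * (1 - ‖z‖ ^ 2) ^ β / Real.pi)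

section Abeta

variable {β : ℝ}

instance : SigmaFinite (Abeta β) := by unfold Abeta; infer_instance

lemma bergman_density_nonneg (hβ : -1 < β) {r : ℝ} (hr₀ : 0 ≤ r) (hr₁ : r ≤ 1) :
    0 ≤ (β + 1) * (1 - r ^ 2) ^ β / Real.pi := by
  have : 0 ≤ β + 1 := by linarith
  have : 0 ≤ 1 - r ^ 2 := sub_nonneg.2 (pow_le_one₀ hr₀ hr₁)
  positivity

lemma polydisc_eq_pi (n : ℕ) : polydisc n = Set.pi univ fun _ ↦ ball 0 1 := by
  ext; simp [polydisc]

lemma Vbeta_eq_pi (n : ℕ) (hβ : -1 < β) : Vbeta n β = Measure.pi fun _ ↦ Abeta β := by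
  unfold Vbeta Abeta
  rw [pi_withDensity _ fun _ ↦ by fun_prop, ← Measure.restrict_pi_pi, polydisc_eq_pi, volume_pi]
  refine withDensity_congr_ae (ae_restrict_of_forall_mem
    (MeasurableSet.univ_pi fun _ ↦ measurableSet_ball) fun z hz ↦ ?_)
  refine ENNReal.ofReal_prod_of_nonneg fun j _ ↦
    bergman_density_nonneg hβ (norm_nonneg _) (mem_ball_zero_iff.1 (hz j (mem_univ j))).le

lemma measurePreserving_mul_left_Abeta {u : ℂ} (hu : ‖u‖ = 1) :
    MeasurePreserving (u * ·) (Abeta β) (Abeta β) := by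
  have hvol : MeasurePreserving (u * ·) (volume : Measure ℂ) volume :=
    (rotation ⟨u, mem_sphere_zero_iff_norm.2 hu⟩).measurePreserving
  refine ⟨hvol.measurable, Measure.ext fun s hs ↦ ?_⟩
  rw [Measure.map_apply hvol.measurable hs, Abeta, withDensity_apply _ hs,
    withDensity_apply _ (hvol.measurable hs), Measure.restrict_restrict hs,
    Measure.restrict_restrict (hvol.measurable hs),
    ← hvol.setLIntegral_comp_preimage (hs.inter measurableSet_ball) (by fun_prop)]
  have : (u * ·) ⁻¹' ball (0 : ℂ) 1 = ball 0 1 := by ext; simp [hu]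
  simp [preimage_inter, this, hu]

lemma measurePreserving_mul_left_Vbeta (hβ : -1 < β) {n : ℕ} {u : Fin n → ℂ}
    (hu : ∀ j, ‖u j‖ = 1) :
    MeasurePreserving (u * ·) (Vbeta n β) (Vbeta n β) := by
  rw [Vbeta_eq_pi n hβ]
  exact measurePreserving_pi _ _ fun j ↦ measurePreserving_mul_left_Abeta (hu j)

lemma Abeta_apply_eq_lintegral_circleMap {A : Set ℂ} (hA : MeasurableSet A) :
    Abeta β A = ∫⁻ r in Ioo 0 1,
      ENNReal.ofReal (r * ((β + 1) * (1 - r ^ 2) ^ β / Real.pi)) *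
        volume (Ioo (-Real.pi) Real.pi ∩ circleMap 0 r ⁻¹' A) := by
  let g (r : ℝ) : ℝ≥0∞ := ENNReal.ofReal ((β + 1) * (1 - r ^ 2) ^ β / Real.pi)
  have hg : Measurable ((Iio 1).indicator g) :=
    Measurable.indicator (by fun_prop) measurableSet_Iio
  calc Abeta β A = ∫⁻ z in A, (Iio 1).indicator g ‖z‖ := by
        rw [Abeta, withDensity_apply _ hA, Measure.restrict_restrict hA, inter_comm,
          ← Measure.restrict_restrict measurableSet_ball, ← lintegral_indicator measurableSet_ball]
        simp [indicator, g]
    _ = ∫⁻ r in Ioi 0, ENNReal.ofReal r * (Iio 1).indicator g r *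
          volume (Ioo (-Real.pi) Real.pi ∩ circleMap 0 r ⁻¹' A) := setLIntegral_comp_norm hg hA
    _ = ∫⁻ r in Ioi 0, (Iio 1).indicator (fun r ↦ ENNReal.ofReal r * g r *
          volume (Ioo (-Real.pi) Real.pi ∩ circleMap 0 r ⁻¹' A)) r := by
        refine lintegral_congr fun r ↦ ?_
        by_cases hr : r ∈ Iio 1 <;> simp [hr]
    _ = ∫⁻ r in Ioo 0 1, ENNReal.ofReal r * g r *
          volume (Ioo (-Real.pi) Real.pi ∩ circleMap 0 r ⁻¹' A) := by
        rw [setLIntegral_indicator measurableSet_Iio, Iio_inter_Ioi]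
    _ = _ := by
        refine setLIntegral_congr_fun measurableSet_Ioo fun r hr ↦ ?_
        simp only [g, ENNReal.ofReal_mul hr.1.le]

lemma lintegral_Ioo_bergman_density (hβ : -1 < β) {t : ℝ} (ht₀ : 0 ≤ t) (ht₁ : t ≤ 1) :
    ∫⁻ r in Ioo (1 - t) 1, ENNReal.ofReal (r * ((β + 1) * (1 - r ^ 2) ^ β / Real.pi)) =
      ENNReal.ofReal ((t * (2 - t)) ^ (β + 1) / (2 * Real.pi)) := by
  let F (r : ℝ) : ℝ := -((1 - r ^ 2) ^ (β + 1) / (2 * Real.pi))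
  have hcont : ContinuousOn F (Icc (1 - t) 1) :=
    ((Continuous.rpow_const (by fun_prop) fun _ ↦ .inr (by linarith)).div_const _).neg.continuousOn
  have hderiv (r : ℝ) (hr : r ∈ Ioo (1 - t) 1) :
      HasDerivAt F (r * ((β + 1) * (1 - r ^ 2) ^ β / Real.pi)) r := by
    have hsq : HasDerivAt (fun r : ℝ ↦ 1 - r ^ 2) (-(2 * r)) r := by
      simpa using (hasDerivAt_pow 2 r).const_sub 1
    have hne : 1 - r ^ 2 ≠ 0 := by nlinarith [hr.1, hr.2]
    refine ((hsq.rpow_const (p := β + 1) (.inl hne)).div_const (2 * Real.pi)).neg.congr_deriv ?_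
    rw [add_sub_cancel_right]
    field
  have hnonneg (r : ℝ) (hr : r ∈ Ioo (1 - t) 1) :
      0 ≤ r * ((β + 1) * (1 - r ^ 2) ^ β / Real.pi) := by
    have hr₀ : 0 ≤ r := by linarith [hr.1]
    exact mul_nonneg hr₀ (bergman_density_nonneg hβ hr₀ hr.2.le)
  have hint := intervalIntegral.integrableOn_deriv_of_nonneg hcont hderiv hnonneg
  rw [← ofReal_integral_eq_lintegral_ofReal (hint.mono_set Ioo_subset_Ioc_self)
      (ae_restrict_of_forall_mem measurableSet_Ioo hnonneg),
    ← integral_Ioc_eq_integral_Ioo, ← intervalIntegral.integral_of_le (by linarith),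
    intervalIntegral.integral_eq_sub_of_hasDerivAt_of_le (by linarith) hcont hderiv
      ((intervalIntegrable_iff_integrableOn_Ioc_of_le (by linarith)).2 hint)]
  have : β + 1 ≠ 0 := by linarith
  simp only [F, one_pow, sub_self, Real.zero_rpow this]
  ring_nf

lemma Abeta_le_of_forall_volume_le (hβ : -1 < β) {A : Set ℂ} (hA : MeasurableSet A) {t : ℝ}
    (ht₀ : 0 ≤ t) (ht₁ : t ≤ 1) (hAt : ∀ z ∈ A, 1 - t ≤ ‖z‖) {V : ℝ≥0∞}
    (hV : ∀ r ∈ Ico (1 - t) 1, volume (Ioo (-Real.pi) Real.pi ∩ circleMap 0 r ⁻¹' A) ≤ V) :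
    Abeta β A ≤ ENNReal.ofReal ((2 * t) ^ (β + 1) / (2 * Real.pi)) * V := by
  let g (r : ℝ) : ℝ≥0∞ := ENNReal.ofReal (r * ((β + 1) * (1 - r ^ 2) ^ β / Real.pi))
  calc Abeta β A
      = ∫⁻ r in Ioo 0 1, g r * volume (Ioo (-Real.pi) Real.pi ∩ circleMap 0 r ⁻¹' A) :=
        Abeta_apply_eq_lintegral_circleMap hA
    _ ≤ ∫⁻ r in Ioo 0 1, (Ici (1 - t)).indicator (fun r ↦ g r * V) r := by
        refine setLIntegral_mono' measurableSet_Ioo fun r hr ↦ ?_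
        by_cases hrt : 1 - t ≤ r
        · rw [indicator_of_mem (mem_Ici.2 hrt)]
          gcongr
          exact hV r ⟨hrt, hr.2⟩
        · have : circleMap 0 r ⁻¹' A = ∅ := eq_empty_of_forall_notMem fun θ hθ ↦ hrt <| by
            simpa [abs_of_pos hr.1] using hAt _ hθ
          simp [this]
    _ ≤ ∫⁻ r in Ioo (1 - t) 1, g r * V := by
        rw [setLIntegral_indicator measurableSet_Ici, restrict_Ioo_eq_restrict_Ico]
        exact lintegral_mono_set fun r hr ↦ ⟨hr.1, hr.2.2⟩
    _ = ENNReal.ofReal ((t * (2 - t)) ^ (β + 1) / (2 * Real.pi)) * V := by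
        rw [lintegral_mul_const _ (by fun_prop), lintegral_Ioo_bergman_density hβ ht₀ ht₁]
    _ ≤ ENNReal.ofReal ((2 * t) ^ (β + 1) / (2 * Real.pi)) * V := by
        have : 0 ≤ t * (2 - t) := mul_nonneg ht₀ (by linarith)
        gcongr ENNReal.ofReal (?_ ^ _ / _) * _
        · linarith
        · nlinarith

lemma le_Abeta_of_forall_le_volume (hβ : -1 < β) {A : Set ℂ} (hA : MeasurableSet A) {t : ℝ}
    (ht₀ : 0 ≤ t) (ht₁ : t ≤ 1) {V : ℝ≥0∞}
    (hV : ∀ r ∈ Ioo (1 - t) 1, V ≤ volume (Ioo (-Real.pi) Real.pi ∩ circleMap 0 r ⁻¹' A)) :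
    ENNReal.ofReal (t ^ (β + 1) / (2 * Real.pi)) * V ≤ Abeta β A := by
  let g (r : ℝ) : ℝ≥0∞ := ENNReal.ofReal (r * ((β + 1) * (1 - r ^ 2) ^ β / Real.pi))
  calc ENNReal.ofReal (t ^ (β + 1) / (2 * Real.pi)) * V
      ≤ ENNReal.ofReal ((t * (2 - t)) ^ (β + 1) / (2 * Real.pi)) * V := by
        gcongr ENNReal.ofReal (?_ ^ _ / _) * _
        · linarith
        · nlinarith
    _ = ∫⁻ r in Ioo (1 - t) 1, g r * V := by
        rw [lintegral_mul_const _ (by fun_prop), lintegral_Ioo_bergman_density hβ ht₀ ht₁]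
    _ ≤ ∫⁻ r in Ioo (1 - t) 1, g r *
          volume (Ioo (-Real.pi) Real.pi ∩ circleMap 0 r ⁻¹' A) :=
        setLIntegral_mono' measurableSet_Ioo fun r hr ↦ mul_le_mul_right (hV r hr) _
    _ ≤ Abeta β A := by
        rw [Abeta_apply_eq_lintegral_circleMap hA]
        exact lintegral_mono_set (Ioo_subset_Ioo_left (by linarith))

lemma Abeta_le_of_norm_pow_sub_le (hβ : -1 < β) {p : ℕ} (hp : p ≠ 0) {t : ℝ} (ht₀ : 0 ≤ t)
    (ht : t ≤ 1 / 2) (ζ : ℂ) {ε : ℝ} (hε : 0 ≤ ε) :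
    Abeta β {z | 1 - t ≤ ‖z‖ ∧ ‖z ^ p - ζ‖ ≤ ε} ≤
      ENNReal.ofReal (2 ^ p * (2 * t) ^ (β + 1) * ε) := by
  have hangle (r : ℝ) (hr : r ∈ Ico (1 - t) 1) : volume (Ioo (-Real.pi) Real.pi ∩
      circleMap 0 r ⁻¹' {z | 1 - t ≤ ‖z‖ ∧ ‖z ^ p - ζ‖ ≤ ε}) ≤
        ENNReal.ofReal (2 * Real.pi * ε * 2 ^ p) := by
    have hr₀ : 1 / 2 ≤ r := by linarith [hr.1]
    calc _ ≤ volume (Ioo (-Real.pi) Real.pi ∩ {θ | ‖circleMap 0 r θ ^ p - ζ‖ ≤ ε}) :=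
          measure_mono (inter_subset_inter_right _ fun θ hθ ↦ hθ.2)
      _ ≤ ENNReal.ofReal (2 * Real.pi * ε / r ^ p) :=
          volume_circleMap_pow_mem_closedBall_le hp (by linarith) ζ ε
      _ ≤ ENNReal.ofReal (2 * Real.pi * ε / (1 / 2) ^ p) := by gcongr
      _ = ENNReal.ofReal (2 * Real.pi * ε * 2 ^ p) := by rw [one_div, inv_pow, div_inv_eq_mul]
  refine (Abeta_le_of_forall_volume_le hβ (by measurability) ht₀ (by linarith)
    (fun z hz ↦ hz.1) hangle).trans_eq ?_
  rw [← ENNReal.ofReal_mul (by positivity)]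
  congr 1
  field

lemma le_Abeta_of_forall_circleMap_mem (hβ : -1 < β) {A : Set ℂ} (hA : MeasurableSet A) {t ε : ℝ}
    (ht₀ : 0 ≤ t) (ht₁ : t ≤ 1) (hε : ε ≤ Real.pi)
    (h : ∀ r ∈ Ioo (1 - t) 1, ∀ θ ∈ Ioo 0 ε, circleMap 0 r θ ∈ A) :
    ENNReal.ofReal (t ^ (β + 1) * ε / (2 * Real.pi)) ≤ Abeta β A := by
  have hangle (r : ℝ) (hr : r ∈ Ioo (1 - t) 1) :
      ENNReal.ofReal ε ≤ volume (Ioo (-Real.pi) Real.pi ∩ circleMap 0 r ⁻¹' A) :=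
    calc ENNReal.ofReal ε = volume (Ioo 0 ε) := by simp
      _ ≤ volume (Ioo (-Real.pi) Real.pi ∩ circleMap 0 r ⁻¹' A) := measure_mono fun θ hθ ↦
        ⟨⟨by linarith [hθ.1, Real.pi_pos], by linarith [hθ.2]⟩, h r hr θ hθ⟩
  refine Eq.trans_le ?_ (le_Abeta_of_forall_le_volume hβ hA ht₀ ht₁ hangle)
  rw [← ENNReal.ofReal_mul (by positivity)]
  ring_nf

lemma le_Abeta_one_sub_re_le (hβ : -1 < β) {t : ℝ} (ht₀ : 0 ≤ t) (ht₁ : t ≤ 1) :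
    ENNReal.ofReal (t ^ (β + 1) * √t / (2 * Real.pi)) ≤
      Abeta β {z | ‖z‖ < 1 ∧ 1 - z.re ≤ 2 * t} := by
  refine le_Abeta_of_forall_circleMap_mem hβ (by measurability) ht₀ ht₁
    ((Real.sqrt_le_one.2 ht₁).trans (by linarith [Real.pi_gt_three])) fun r hr θ hθ ↦ ?_
  have hr₀ : 0 ≤ r := by linarith [hr.1]
  have hθt : θ ^ 2 ≤ t := (Real.le_sqrt hθ.1.le ht₀).1 hθ.2.le
  have hcos : 1 - t / 2 ≤ Real.cos θ := by linarith [Real.one_sub_sq_div_two_le_cos (x := θ)]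
  refine ⟨by simpa [abs_of_nonneg hr₀] using hr.2, ?_⟩
  simp only [circleMap_zero_re]
  nlinarith [hr.1]

lemma le_Abeta_ball_inter_closedBall (hβ : -1 < β) {u : ℂ} (hu : ‖u‖ = 1) {t : ℝ} (ht₀ : 0 ≤ t)
    (ht₁ : t ≤ 1) :
    ENNReal.ofReal (t ^ (β + 1) * t / (2 * Real.pi)) ≤
      Abeta β (ball 0 1 ∩ closedBall u (2 * t)) := by
  have hrot := measurePreserving_mul_left_Abeta (β := β) hu
  have hmeas : MeasurableSet (ball 0 1 ∩ closedBall u (2 * t)) :=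
    measurableSet_ball.inter measurableSet_closedBall
  rw [← hrot.measure_preimage hmeas.nullMeasurableSet]
  refine le_Abeta_of_forall_circleMap_mem hβ (hrot.measurable hmeas) ht₀ ht₁
    (by linarith [Real.pi_gt_three]) fun r hr θ hθ ↦ ?_
  have hr₀ : 0 ≤ r := by linarith [hr.1]
  refine ⟨by simpa [hu, abs_of_nonneg hr₀] using hr.2, ?_⟩
  have hradial : dist (circleMap 0 r θ) (circleMap 0 1 θ) = 1 - r := by
    have : circleMap 0 1 θ - circleMap 0 r θ = circleMap 0 (1 - r) θ := by
      simp only [circleMap_zero]; push_cast; ring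
    rw [dist_comm, dist_eq_norm, this, norm_circleMap_zero, abs_of_pos (by linarith [hr.2])]
  have hangular : dist (circleMap 0 1 θ) 1 ≤ θ := by
    simpa [circleMap_zero, abs_of_pos hθ.1] using (lipschitzWith_circleMap 0 1).dist_le_mul θ 0
  calc dist (u * circleMap 0 r θ) u = dist (circleMap 0 r θ) 1 := by
        rw [dist_eq_norm, dist_eq_norm, ← mul_sub_one, norm_mul, hu, one_mul]
    _ ≤ (1 - r) + θ := (dist_triangle _ _ _).trans (add_le_add hradial.le hangular)
    _ ≤ 2 * t := by linarith [hr.1, hθ.2]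

end Abeta

lemma exists_norm_eq_one_and_norm_mul_pow_eq {p : ℕ} (hp : p ≠ 0) (x : ℂ) :
    ∃ u : ℂ, ‖u‖ = 1 ∧ ‖x‖ * u ^ p = x := by
  obtain rfl | hx := eq_or_ne x 0
  · exact ⟨1, by simp⟩
  obtain ⟨u, hu⟩ := IsAlgClosed.exists_pow_nat_eq (x / ‖x‖) (Nat.pos_of_ne_zero hp)
  refine ⟨u, ?_, by rw [hu, mul_div_cancel₀ _ (by simpa using hx)]⟩
  refine (pow_eq_one_iff_of_nonneg (norm_nonneg u) hp).1 ?_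
  rw [← norm_pow, hu, norm_div, Complex.norm_real, norm_norm, div_self (norm_ne_zero_iff.2 hx)]

/-- The set of points of the polydisc at which the sum of powers `∑ j, α j * z j ^ p j` is within
`δ` of `η`. The exponents `p j` may differ from each other and from the dimension. -/
def powSumSublevel {n : ℕ} (α : Fin n → ℂ) (p : Fin n → ℕ) (η : ℂ) (δ : ℝ) : Set (Fin n → ℂ) :=
  {z | z ∈ polydisc n ∧ ‖∑ j, α j * z j ^ p j - η‖ ≤ δ}

lemma measurableSet_powSumSublevel {n : ℕ} (α : Fin n → ℂ) (p : Fin n → ℕ) (η : ℂ) (δ : ℝ) :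
    MeasurableSet (powSumSublevel α p η δ) := by
  unfold powSumSublevel polydisc
  measurability

lemma Vbeta_powSumSublevel_eq_norm {β : ℝ} (hβ : -1 < β) {n : ℕ} (α : Fin n → ℂ) {p : Fin n → ℕ}
    (hp : ∀ j, p j ≠ 0) {η : ℂ} (hη : ‖η‖ = 1) (δ : ℝ) :
    Vbeta n β (powSumSublevel α p η δ) = Vbeta n β (powSumSublevel (fun j ↦ ‖α j‖) p 1 δ) := by
  choose u hu hup using fun j ↦ exists_norm_eq_one_and_norm_mul_pow_eq (hp j) (α j / η)
  rw [← (measurePreserving_mul_left_Vbeta hβ hu).measure_preimage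
    (measurableSet_powSumSublevel (fun j ↦ ‖α j‖) p 1 δ).nullMeasurableSet]
  congr 1
  ext z
  have hη₀ : η ≠ 0 := norm_pos_iff.1 (hη ▸ one_pos)
  have hsum : ∑ j, ‖α j‖ * (u j * z j) ^ p j - 1 = (∑ j, α j * z j ^ p j - η) / η := by
    simp only [norm_div, hη, div_one] at hup
    simp only [mul_pow, ← mul_assoc, hup, sub_div, div_self hη₀, Finset.sum_div, div_mul_eq_mul_div]
  simp [powSumSublevel, polydisc, hu, hsum, hη]

lemma rpow_mul_self_mul_rpow_mul_sqrt_pow {x : ℝ} (hx : 0 < x) (b : ℝ) (m : ℕ) :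
    x ^ b * x * (x ^ b * √x) ^ m = x ^ ((m + 1 : ℕ) * b + ((m + 1 : ℕ) + 1) / 2 : ℝ) := by
  nth_rewrite 2 [← Real.rpow_one x]
  rw [Real.sqrt_eq_rpow, ← Real.rpow_add hx, ← Real.rpow_add hx, ← Real.rpow_mul_natCast hx.le,
    ← Real.rpow_add hx]
  congr 1
  push_cast
  ring

lemma one_sub_le_norm_of_mem_powSumSublevel {n : ℕ} {δ t : ℝ} {a : Fin n → ℝ} {p : Fin n → ℕ}
    (ha : ∀ j, 0 < a j) (hsum : ∑ j, a j = 1) (hp : ∀ j, p j ≠ 0) (hδ : ∀ j, δ ≤ a j * t)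
    {z : Fin n → ℂ} (hz : z ∈ powSumSublevel (fun j ↦ a j) p 1 δ) (k : Fin n) :
    1 - t ≤ ‖z k‖ ∧ ‖z k ^ p k - 1‖ ≤ √(2 * t) := by
  have hpow (j : Fin n) : ‖z j ^ p j‖ ≤ 1 := by
    rw [norm_pow]
    exact pow_le_one₀ (norm_nonneg _) (hz.1 j).le
  have hre : 1 - (z k ^ p k).re ≤ t :=
    le_of_mul_le_mul_left ((mul_one_sub_re_le_norm_sum_sub_one (fun j ↦ (ha j).le) hsum
      (fun j ↦ (Complex.re_le_norm _).trans (hpow j)) k).trans (hz.2.trans (hδ k))) (ha k)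
  constructor
  · calc 1 - t ≤ (z k ^ p k).re := by linarith
      _ ≤ ‖z k‖ ^ p k := norm_pow (z k) _ ▸ Complex.re_le_norm _
      _ ≤ ‖z k‖ := pow_le_of_le_one (norm_nonneg _) (hz.1 k).le (hp k)
  · exact (norm_sub_one_le_sqrt (hpow k)).trans (Real.sqrt_le_sqrt (by linarith))

lemma norm_sub_div_le_of_norm_mul_add_sub_one_le {a δ t : ℝ} (ha : 0 < a) (hδ : δ ≤ a * t)
    {w s : ℂ} (h : ‖a * w + s - 1‖ ≤ δ) : ‖w - (1 - s) / a‖ ≤ t := by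
  have ha' : (a : ℂ) ≠ 0 := mod_cast ha.ne'
  have : a * w + s - 1 = a * (w - (1 - s) / a) := by field
  rw [this, norm_mul, Complex.norm_of_nonneg ha.le] at h
  exact le_of_mul_le_mul_left (h.trans hδ) ha

section PositiveWeights

variable {m : ℕ} {β δ t : ℝ} {a : Fin (m + 1) → ℝ} {p : Fin (m + 1) → ℕ}

lemma Vbeta_powSumSublevel_le (hβ : -1 < β) (ha : ∀ j, 0 < a j) (hsum : ∑ j, a j = 1)
    (hp : ∀ j, p j ≠ 0) (hδ : ∀ j, δ ≤ a j * t) (ht₀ : 0 < t) (ht : t ≤ 1 / 2) :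
    Vbeta (m + 1) β (powSumSublevel (fun j ↦ a j) p 1 δ) ≤ ENNReal.ofReal (2 ^ (∑ j, p j) *
      (2 * t) ^ ((m + 1 : ℕ) * (β + 1) + ((m + 1 : ℕ) + 1) / 2 : ℝ)) := by
  set S := powSumSublevel (fun j ↦ (a j : ℂ)) p 1 δ
  have hslice (z : Fin m → ℂ) : Abeta β {x | Fin.cons x z ∈ S} ≤
      ENNReal.ofReal (2 ^ p 0 * (2 * t) ^ (β + 1) * t) := by
    refine (measure_mono fun x hx ↦ ?_).trans (Abeta_le_of_norm_pow_sub_le hβ (hp 0) ht₀.le ht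
      ((1 - ∑ j : Fin m, a j.succ * z j ^ p j.succ) / a 0) ht₀.le)
    refine ⟨by simpa using (one_sub_le_norm_of_mem_powSumSublevel ha hsum hp hδ hx 0).1, ?_⟩
    refine norm_sub_div_le_of_norm_mul_add_sub_one_le (ha 0) (hδ 0) ?_
    simpa [Fin.sum_univ_succ] using hx.2
  calc Vbeta (m + 1) β S
      ≤ ENNReal.ofReal (2 ^ p 0 * (2 * t) ^ (β + 1) * t) * ∏ j : Fin m,
          Abeta β {z | 1 - t ≤ ‖z‖ ∧ ‖z ^ p j.succ - 1‖ ≤ √(2 * t)} := by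
        rw [Vbeta_eq_pi _ hβ]
        exact pi_le_mul_prod_of_cons_le _ (measurableSet_powSumSublevel ..)
          (fun j ↦ by measurability)
          (fun z hz j ↦ one_sub_le_norm_of_mem_powSumSublevel ha hsum hp hδ hz j.succ) hslice
    _ ≤ ENNReal.ofReal (2 ^ p 0 * (2 * t) ^ (β + 1) * t) * ∏ j : Fin m,
          ENNReal.ofReal (2 ^ p j.succ * (2 * t) ^ (β + 1) * √(2 * t)) := by
        gcongr with j
        exact Abeta_le_of_norm_pow_sub_le hβ (hp _) ht₀.le ht 1 (Real.sqrt_nonneg _)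
    _ ≤ ENNReal.ofReal (2 ^ p 0 * (2 * t) ^ (β + 1) * (2 * t)) * ∏ j : Fin m,
          ENNReal.ofReal (2 ^ p j.succ * (2 * t) ^ (β + 1) * √(2 * t)) := by
        gcongr
        linarith
    _ = _ := by
        rw [← ENNReal.ofReal_prod_of_nonneg (fun j _ ↦ by positivity),
          ← ENNReal.ofReal_mul (by positivity),
          ← rpow_mul_self_mul_rpow_mul_sqrt_pow (by positivity), Fin.sum_univ_succ, pow_add,
          ← Finset.prod_pow_eq_pow_sum]
        simp only [mul_assoc, Finset.prod_mul_distrib, Finset.prod_const, Finset.card_univ,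
          Fintype.card_fin, mul_pow]
        ring_nf

lemma exists_norm_eq_one_norm_mul_pow_add_sum_sub_one_le (ha : ∀ j, 0 ≤ a j) (ha₀ : 0 < a 0)
    (hsum : ∑ j, a j = 1) (hp₀ : p 0 ≠ 0) {N : ℕ} (hN : ∀ j, p j ≤ N) {z : Fin m → ℂ}
    (ht₀ : 0 ≤ t) (hz : ∀ j, ‖z j‖ < 1 ∧ 1 - (z j).re ≤ t) :
    ∃ u : ℂ, ‖u‖ = 1 ∧
      ‖a 0 * u ^ p 0 + ∑ j : Fin m, a j.succ * z j ^ p j.succ - 1‖ ≤ 2 * (N ^ 2 * t) / a 0 := by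
  have hre (j : Fin m) : 1 - (z j ^ p j.succ).re ≤ N ^ 2 * t :=
    calc 1 - (z j ^ p j.succ).re ≤ p j.succ ^ 2 * (1 - (z j).re) := one_sub_re_pow_le (hz j).1.le _
      _ ≤ p j.succ ^ 2 * t := by gcongr; exact (hz j).2
      _ ≤ N ^ 2 * t := by gcongr; exact hN _
  obtain ⟨v, hv, hvsum⟩ := exists_norm_eq_one_norm_add_sum_sub_one_le ha₀
    (fun j : Fin m ↦ ha j.succ) (by rw [← hsum, Fin.sum_univ_succ])
    (fun j ↦ (norm_pow (z j) _).trans_le (pow_le_one₀ (norm_nonneg _) (hz j).1.le))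
    (by positivity) hre
  obtain ⟨u, hu, huv⟩ := exists_norm_eq_one_and_norm_mul_pow_eq hp₀ v
  rw [hv, Complex.ofReal_one, one_mul] at huv
  exact ⟨u, hu, huv ▸ hvsum⟩

lemma exists_ball_inter_closedBall_subset_cons_mem_powSumSublevel (ha : ∀ j, 0 ≤ a j)
    (ha₀ : 0 < a 0) (hsum : ∑ j, a j = 1) (hp₀ : p 0 ≠ 0) {N : ℕ} (hN : ∀ j, p j ≤ N) (ht₀ : 0 ≤ t)
    (hδ : 6 * N ^ 2 * t ≤ a 0 * δ) {z : Fin m → ℂ} (hz : ∀ j, ‖z j‖ < 1 ∧ 1 - (z j).re ≤ 2 * t) :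
    ∃ u : ℂ, ‖u‖ = 1 ∧ ball 0 1 ∩ closedBall u (2 * t) ⊆
      {x | Fin.cons x z ∈ powSumSublevel (fun j ↦ a j) p 1 δ} := by
  obtain ⟨u, hu, hsum_u⟩ := exists_norm_eq_one_norm_mul_pow_add_sum_sub_one_le
    ha ha₀ hsum hp₀ hN (by positivity) hz
  refine ⟨u, hu, fun x hx ↦ ?_⟩
  have hx₁ : ‖x‖ < 1 := mem_ball_zero_iff.1 hx.1
  have hN_le_sq : (N : ℝ) ≤ N ^ 2 := by exact_mod_cast Nat.le_self_pow two_ne_zero N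
  have ha₁ : a 0 ≤ 1 := hsum ▸ Finset.single_le_sum (fun j _ ↦ ha j) (Finset.mem_univ 0)
  have hmove : ‖a 0 * (x ^ p 0 - u ^ p 0)‖ ≤ 2 * (N ^ 2 * t) / a 0 :=
    calc ‖a 0 * (x ^ p 0 - u ^ p 0)‖ = a 0 * ‖x ^ p 0 - u ^ p 0‖ := by
          rw [norm_mul, Complex.norm_of_nonneg ha₀.le]
      _ ≤ 1 * (p 0 * ‖x - u‖) := by
          gcongr
          exact norm_pow_sub_pow_le hx₁.le hu.le _
      _ ≤ 1 * (N ^ 2 * (2 * t)) := by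
          gcongr
          · exact (Nat.cast_le.2 (hN 0)).trans hN_le_sq
          · exact mem_closedBall_iff_norm.1 hx.2
      _ = 2 * (N ^ 2 * t) := by ring
      _ ≤ 2 * (N ^ 2 * t) / a 0 := le_div_self (by positivity) ha₀ ha₁
  refine ⟨Fin.cases hx₁ fun j ↦ (hz j).1, ?_⟩
  calc ‖∑ j, (a j : ℂ) * (Fin.cons x z : Fin (m + 1) → ℂ) j ^ p j - 1‖
      = ‖a 0 * (x ^ p 0 - u ^ p 0) +
          (a 0 * u ^ p 0 + ∑ j : Fin m, a j.succ * z j ^ p j.succ - 1)‖ := by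
        simp only [Fin.sum_univ_succ, Fin.cons_zero, Fin.cons_succ]
        ring_nf
    _ ≤ 2 * (N ^ 2 * t) / a 0 + 2 * (N ^ 2 * (2 * t)) / a 0 := norm_add_le_of_le hmove hsum_u
    _ = 6 * N ^ 2 * t / a 0 := by ring
    _ ≤ δ := (div_le_iff₀' ha₀).2 hδ

lemma le_Vbeta_powSumSublevel (hβ : -1 < β) (ha : ∀ j, 0 ≤ a j) (ha₀ : 0 < a 0)
    (hsum : ∑ j, a j = 1) (hp₀ : p 0 ≠ 0) {N : ℕ} (hN : ∀ j, p j ≤ N) (ht₀ : 0 < t) (ht₁ : t ≤ 1)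
    (hδ : 6 * N ^ 2 * t ≤ a 0 * δ) :
    ENNReal.ofReal ((2 * Real.pi)⁻¹ ^ (m + 1) *
      t ^ ((m + 1 : ℕ) * (β + 1) + ((m + 1 : ℕ) + 1) / 2 : ℝ)) ≤
        Vbeta (m + 1) β (powSumSublevel (fun j ↦ a j) p 1 δ) := by
  have hslice (z : Fin m → ℂ) (hz : ∀ j, z j ∈ {x : ℂ | ‖x‖ < 1 ∧ 1 - x.re ≤ 2 * t}) :
      ENNReal.ofReal (t ^ (β + 1) * t / (2 * Real.pi)) ≤
        Abeta β {x | Fin.cons x z ∈ powSumSublevel (fun j ↦ (a j : ℂ)) p 1 δ} := by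
    obtain ⟨u, hu, hsub⟩ := exists_ball_inter_closedBall_subset_cons_mem_powSumSublevel
      ha ha₀ hsum hp₀ hN ht₀.le hδ hz
    exact (le_Abeta_ball_inter_closedBall hβ hu ht₀.le ht₁).trans (measure_mono hsub)
  calc _ = ENNReal.ofReal (t ^ (β + 1) * t / (2 * Real.pi)) * ∏ _j : Fin m,
          ENNReal.ofReal (t ^ (β + 1) * √t / (2 * Real.pi)) := by
        rw [← ENNReal.ofReal_prod_of_nonneg (fun j _ ↦ by positivity),
          ← ENNReal.ofReal_mul (by positivity), ← rpow_mul_self_mul_rpow_mul_sqrt_pow ht₀]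
        simp only [Finset.prod_const, Finset.card_univ, Fintype.card_fin, div_eq_mul_inv, mul_pow]
        ring_nf
    _ ≤ ENNReal.ofReal (t ^ (β + 1) * t / (2 * Real.pi)) * ∏ _j : Fin m,
          Abeta β {z | ‖z‖ < 1 ∧ 1 - z.re ≤ 2 * t} := by
        gcongr
        exact le_Abeta_one_sub_re_le hβ ht₀.le ht₁
    _ ≤ Vbeta (m + 1) β (powSumSublevel (fun j ↦ a j) p 1 δ) := by
        rw [Vbeta_eq_pi _ hβ]
        exact mul_prod_le_pi_of_le_cons _ (measurableSet_powSumSublevel ..)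
          (fun _ ↦ by measurability) hslice

lemma exists_forall_le_Vbeta_powSumSublevel (hβ : -1 < β) (ha : ∀ j, 0 ≤ a j) (ha₀ : 0 < a 0)
    (hsum : ∑ j, a j = 1) (hp₀ : p 0 ≠ 0) :
    ∃ c > (0 : ℝ), ∀ δ : ℝ, 0 < δ → δ ≤ 1 →
      ENNReal.ofReal (c * δ ^ ((m + 1 : ℕ) * (β + 1) + ((m + 1 : ℕ) + 1) / 2 : ℝ)) ≤
        Vbeta (m + 1) β (powSumSublevel (fun j ↦ a j) p 1 δ) := by
  have hpN (j : Fin (m + 1)) : p j ≤ ∑ i, p i :=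
    Finset.single_le_sum_of_canonicallyOrdered (Finset.mem_univ j)
  set N := ∑ j, p j
  have hN : (1 : ℝ) ≤ N := mod_cast (Nat.one_le_iff_ne_zero.2 hp₀).trans (hpN 0)
  have ha₁ : a 0 ≤ 1 := hsum ▸ Finset.single_le_sum (fun j _ ↦ ha j) (Finset.mem_univ 0)
  set κ : ℝ := a 0 / (6 * N ^ 2) with hκ
  have hκ₀ : 0 < κ := by positivity
  have hκ₁ : κ ≤ 1 := div_le_one_of_le₀ (by nlinarith) (by positivity)
  set e : ℝ := (m + 1 : ℕ) * (β + 1) + ((m + 1 : ℕ) + 1) / 2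
  refine ⟨(2 * Real.pi)⁻¹ ^ (m + 1) * κ ^ e, by positivity, fun δ hδ₀ hδ₁ ↦ ?_⟩
  rw [mul_assoc, ← Real.mul_rpow hκ₀.le hδ₀.le]
  refine le_Vbeta_powSumSublevel hβ ha ha₀ hsum hp₀ hpN (by positivity)
    (mul_le_one₀ hκ₁ hδ₀.le hδ₁) (le_of_eq ?_)
  rw [hκ]
  field

lemma exists_forall_Vbeta_powSumSublevel_le (hβ : -1 < β) (ha : ∀ j, 0 < a j)
    (hsum : ∑ j, a j = 1) (hp : ∀ j, p j ≠ 0) :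
    ∃ C > (0 : ℝ), ∃ δ₀ > (0 : ℝ), ∀ δ : ℝ, 0 < δ → δ ≤ δ₀ →
      Vbeta (m + 1) β (powSumSublevel (fun j ↦ a j) p 1 δ) ≤
        ENNReal.ofReal (C * δ ^ ((m + 1 : ℕ) * (β + 1) + ((m + 1 : ℕ) + 1) / 2 : ℝ)) := by
  obtain ⟨k, hk⟩ := Finite.exists_min a
  have hak := ha k
  set e : ℝ := (m + 1 : ℕ) * (β + 1) + ((m + 1 : ℕ) + 1) / 2
  refine ⟨2 ^ (∑ j, p j) * (2 / a k) ^ e, by positivity, a k / 2, by positivity,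
    fun δ hδ₀ hδ ↦ ?_⟩
  rw [mul_assoc, ← Real.mul_rpow (by positivity) hδ₀.le, div_mul_eq_mul_div, mul_div_assoc]
  refine Vbeta_powSumSublevel_le hβ ha hsum hp (fun j ↦ ?_) (by positivity) ?_
  · rw [← mul_div_assoc, le_div_iff₀ hak, mul_comm]
    gcongr
    exact hk j
  · rw [div_le_iff₀ hak]
    linarith

end PositiveWeights

theorem sum_of_powers_sublevel_volume_general (n : ℕ) (α : Fin n → ℂ)
    (hα : ∑ j, ‖α j‖ = 1) (hα0 : ∀ j, α j ≠ 0) (p : Fin n → ℕ) (hp : ∀ j, p j ≠ 0)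
    (β : ℝ) (hβ : -1 < β) (η : ℂ) (hη : ‖η‖ = 1) :
    ∃ c > (0 : ℝ), ∃ C > (0 : ℝ), ∃ δ₀ > (0 : ℝ), ∀ δ : ℝ, 0 < δ → δ < δ₀ →
      ENNReal.ofReal (c * δ ^ ((n : ℝ) * (β + 1) + ((n : ℝ) + 1) / 2)) ≤
          Vbeta n β (powSumSublevel α p η δ) ∧
        Vbeta n β (powSumSublevel α p η δ) ≤
          ENNReal.ofReal (C * δ ^ ((n : ℝ) * (β + 1) + ((n : ℝ) + 1) / 2)) := by
  obtain _ | m := n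
  · simp at hα
  have hα_pos (j : Fin (m + 1)) : 0 < ‖α j‖ := norm_pos_iff.2 (hα0 j)
  obtain ⟨c, hc, hlower⟩ :=
    exists_forall_le_Vbeta_powSumSublevel hβ (fun j ↦ norm_nonneg (α j)) (hα_pos 0) hα (hp 0)
  obtain ⟨C, hC, δ₀, hδ₀, hupper⟩ := exists_forall_Vbeta_powSumSublevel_le hβ hα_pos hα hp
  refine ⟨c, hc, C, hC, min 1 δ₀, by positivity, fun δ hδ hδ_lt ↦ ?_⟩
  rw [Vbeta_powSumSublevel_eq_norm hβ α hp hη]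
  exact ⟨hlower δ hδ (hδ_lt.le.trans (min_le_left _ _)),
    hupper δ hδ (hδ_lt.le.trans (min_le_right _ _))⟩

theorem sum_of_powers_sublevel_volume (n : ℕ) (α : Fin n → ℂ)
    (hα : ∑ j, ‖α j‖ = 1) (hα0 : ∀ j, α j ≠ 0) (β : ℝ) (hβ : -1 < β)
    (η : ℂ) (hη : ‖η‖ = 1) :
    ∃ c > (0:ℝ), ∃ C > (0:ℝ), ∃ δ₀ > (0:ℝ), ∀ δ : ℝ, 0 < δ → δ < δ₀ →
      ENNReal.ofReal (c * δ ^ ((n:ℝ) * (β + 1) + ((n:ℝ) + 1) / 2)) ≤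
          Vbeta n β {z | z ∈ polydisc n ∧ ‖(∑ j, α j * z j ^ n) - η‖ ≤ δ} ∧
        Vbeta n β {z | z ∈ polydisc n ∧ ‖(∑ j, α j * z j ^ n) - η‖ ≤ δ} ≤
          ENNReal.ofReal (C * δ ^ ((n:ℝ) * (β + 1) + ((n:ℝ) + 1) / 2)) :=
  sum_of_powers_sublevel_volume_general n α hα hα0 (fun _ ↦ n) (fun j ↦ j.pos.ne') β hβ η hη

end
end
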